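/- arXiv:0902.3216 — 6 statements merged into one kernel-verified Lean document; each statement's English description precedes it below -/
import Mathlib

section
/- Let N ≥ 1 and 2 ≤ p_max < ∞. There exists a constant C > 0, depending only on N and p_max, such that for every exponent p with 2 ≤ p ≤ p_max and all vectors η, ξ ∈ ℝ^N one has |η − ξ|^p ≤ C (|η|^{p−2}η − |ξ|^{p−2}ξ) · (η − ξ), where · denotes the Euclidean inner product (with the convention |q|^{p−2}q = 0 when q = 0). -/
/-!
Write `a = |η|^{p-2}` and `b = |ξ|^{p-2}`. Polarization gives
`(aη - bξ) · (η - ξ) = (a + b)/2 |η - ξ|² + (a - b)(|η|² - |ξ|²)/2`,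
and the last term is nonnegative because `t ↦ t^{p-2}` is nondecreasing for `p ≥ 2`.
On the other hand `|η - ξ| ≤ 2 max(|η|, |ξ|)` yields `|η - ξ|^{p-2} ≤ 2^{p-2} (a + b)`.
Hence `C = 2 · 2^{p_max - 2}` works, independently of `N`.
-/

open scoped RealInnerProductSpace

/-- A quasi-triangle inequality for `t ↦ t ^ s`, from `x + y ≤ 2 max(x, y)`. -/
lemma add_rpow_le_two_rpow_mul {x y s : ℝ} (hx : 0 ≤ x) (hy : 0 ≤ y) (hs : 0 ≤ s) :
    (x + y) ^ s ≤ 2 ^ s * (x ^ s + y ^ s) := by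
  have hx' := Real.rpow_nonneg hx s
  have hy' := Real.rpow_nonneg hy s
  rcases le_total x y with h | h
  · calc (x + y) ^ s ≤ (2 * y) ^ s := by gcongr; linarith
      _ = 2 ^ s * y ^ s := Real.mul_rpow (by norm_num) hy
      _ ≤ 2 ^ s * (x ^ s + y ^ s) := by gcongr; linarith
  · calc (x + y) ^ s ≤ (2 * x) ^ s := by gcongr; linarith
      _ = 2 ^ s * x ^ s := Real.mul_rpow (by norm_num) hx
      _ ≤ 2 ^ s * (x ^ s + y ^ s) := by gcongr; linarith

lemma rpow_sub_mul_sq_sub_nonneg {x y s : ℝ} (hx : 0 ≤ x) (hy : 0 ≤ y) (hs : 0 ≤ s) :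
    0 ≤ (x ^ s - y ^ s) * (x ^ 2 - y ^ 2) := by
  rcases le_total x y with h | h
  · exact mul_nonneg_of_nonpos_of_nonpos
      (sub_nonpos.2 (Real.rpow_le_rpow hx h hs)) (sub_nonpos.2 (pow_le_pow_left₀ hx h 2))
  · exact mul_nonneg
      (sub_nonneg.2 (Real.rpow_le_rpow hy h hs)) (sub_nonneg.2 (pow_le_pow_left₀ hy h 2))

lemma inner_smul_sub_smul_sub {E : Type*} [NormedAddCommGroup E] [InnerProductSpace ℝ E]
    (a b : ℝ) (η ξ : E) :
    ⟪a • η - b • ξ, η - ξ⟫ =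
      (a + b) / 2 * ‖η - ξ‖ ^ 2 + (a - b) * (‖η‖ ^ 2 - ‖ξ‖ ^ 2) / 2 := by
  rw [norm_sub_sq_real]
  simp only [inner_sub_left, inner_sub_right, real_inner_smul_left,
    real_inner_self_eq_norm_sq, real_inner_comm η ξ]
  ring

/-- For `N ≥ 1` and `2 ≤ p_max < ∞` there is a constant `C > 0`,
depending only on `N` and `p_max`, such that for every exponent `p` with `2 ≤ p ≤ p_max`
and all `η, ξ ∈ ℝ^N`,
`|η − ξ|^p ≤ C (|η|^{p−2}η − |ξ|^{p−2}ξ) · (η − ξ)`. -/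
theorem stmt_0 (N : ℕ) (hN : 1 ≤ N) (pmax : ℝ) (hpmax : 2 ≤ pmax) :
    ∃ C : ℝ, 0 < C ∧ ∀ p : ℝ, 2 ≤ p → p ≤ pmax →
      ∀ η ξ : EuclideanSpace ℝ (Fin N),
        ‖η - ξ‖ ^ p ≤ C * ⟪(‖η‖ ^ (p - 2)) • η - (‖ξ‖ ^ (p - 2)) • ξ, η - ξ⟫ := by
  refine ⟨2 * 2 ^ (pmax - 2), by positivity, fun p hp hpm η ξ => ?_⟩
  have hs : 0 ≤ p - 2 := by linarith
  have hmono := rpow_sub_mul_sq_sub_nonneg (norm_nonneg η) (norm_nonneg ξ) hs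
  have hpow : ‖η - ξ‖ ^ p = ‖η - ξ‖ ^ (p - 2) * ‖η - ξ‖ ^ 2 := by
    rw [← Real.rpow_natCast, ← Real.rpow_add_of_nonneg (norm_nonneg _) hs (by positivity)]
    congr 1
    push_cast
    ring
  have hquasi : ‖η - ξ‖ ^ (p - 2) ≤ 2 ^ (pmax - 2) * (‖η‖ ^ (p - 2) + ‖ξ‖ ^ (p - 2)) :=
    calc ‖η - ξ‖ ^ (p - 2) ≤ (‖η‖ + ‖ξ‖) ^ (p - 2) := by
          gcongr
          exact norm_sub_le η ξ
      _ ≤ 2 ^ (p - 2) * (‖η‖ ^ (p - 2) + ‖ξ‖ ^ (p - 2)) :=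
          add_rpow_le_two_rpow_mul (norm_nonneg η) (norm_nonneg ξ) hs
      _ ≤ 2 ^ (pmax - 2) * (‖η‖ ^ (p - 2) + ‖ξ‖ ^ (p - 2)) := by
          gcongr
          norm_num
  rw [hpow, inner_smul_sub_smul_sub]
  have hC : (0 : ℝ) ≤ 2 ^ (pmax - 2) := by positivity
  linarith [mul_le_mul_of_nonneg_right hquasi (sq_nonneg ‖η - ξ‖), mul_nonneg hC hmono]
end

section
/- Let Ω ⊂ ℝ^N be open, u ∈ C²(Ω), and let p : Ω → ℝ be differentiable at a point x ∈ Ω with ∇u(x) ≠ 0. Then the vector field V(z) = |∇u(z)|^{p(z)−2} ∇u(z) is differentiable at x and its divergence at x equals |∇u(x)|^{p(x)−2} { Δu(x) + ((p(x)−2)/|∇u(x)|²) ⟨D²u(x) ∇u(x), ∇u(x)⟩ + log|∇u(x)| ⟨∇p(x), ∇u(x)⟩ }; that is, the p(x)-Laplacian of u at x admits this non-divergence form expression. -/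
/-!
Write `G = ∇u`, `φ(z) = |G(z)|^(p(z)-2)` and `V = φ • G`. The product rule gives
`DV(x) h = φ(x) DG(x) h + (Dφ(x) h) G(x)`, so taking the trace,
`div V(x) = φ(x) Δu(x) + Dφ(x) G(x)`, the second term because `∑ i, ⟨G, eᵢ⟩ eᵢ = G`.
The derivative of `φ` comes from writing `φ = (|G|²)^((p-2)/2)`, whose base is differentiable
everywhere `G` is and nonzero at `x`; evaluating it at `h = G(x)` produces the Hessian term and
the logarithmic term (`differentiableAt_norm_rpow_and_fderiv`). Symmetry of the Hessian plays
no role.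
-/

open scoped RealInnerProductSpace

/-- The gradient of a function of class `C²` at a point is differentiable there: it is the
derivative followed by the inverse Riesz isomorphism. -/
lemma differentiableAt_gradient_of_contDiffAt {E : Type*} [NormedAddCommGroup E]
    [InnerProductSpace ℝ E] [CompleteSpace E] {u : E → ℝ} {x : E} (hu : ContDiffAt ℝ 2 u x) :
    DifferentiableAt ℝ (gradient u) x := by
  have h : DifferentiableAt ℝ (fderiv ℝ u) x :=
    (hu.fderiv_right (m := 1) (by norm_num)).differentiableAt (by norm_num)
  exact ((InnerProductSpace.toDual ℝ E).symm.toContinuousLinearEquiv.differentiableAt).comp x h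

/-- The logarithmic-differentiation formula for `z ↦ |G(z)|^(p(z)-2)` at a point where
`G` does not vanish. -/
lemma differentiableAt_norm_rpow_and_fderiv {E : Type*} [NormedAddCommGroup E]
    [InnerProductSpace ℝ E] {G : E → E} {p : E → ℝ} {x : E}
    (hG : DifferentiableAt ℝ G x) (hp : DifferentiableAt ℝ p x) (hg : G x ≠ 0) :
    DifferentiableAt ℝ (fun z => ‖G z‖ ^ (p z - 2)) x ∧
      ∀ h, fderiv ℝ (fun z => ‖G z‖ ^ (p z - 2)) x h =
        ‖G x‖ ^ (p x - 2) * ((p x - 2) / ‖G x‖ ^ 2 * ⟪fderiv ℝ G x h, G x⟫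
          + Real.log ‖G x‖ * fderiv ℝ p x h) := by
  have hpos : 0 < ‖G x‖ := norm_pos_iff.mpr hg
  have hsq : ∀ z, ‖G z‖ ^ (p z - 2) = (‖G z‖ ^ 2) ^ ((p z - 2) * (1 / 2)) := by
    intro z
    rw [← Real.rpow_natCast_mul (norm_nonneg _)]
    congr 1
    push_cast
    ring
  have hD := (hG.hasFDerivAt.norm_sq).rpow
    ((hp.hasFDerivAt.sub_const 2).mul_const (1 / 2 : ℝ)) (by positivity)
  rw [← funext hsq] at hD
  refine ⟨hD.differentiableAt, fun h => ?_⟩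
  rw [hD.fderiv, Real.rpow_sub_one (by positivity), ← hsq x, Real.log_pow]
  simp only [add_apply, smul_apply,
    ContinuousLinearMap.comp_apply, innerSL_apply_apply, smul_eq_mul, nsmul_eq_mul,
    real_inner_comm (G x)]
  push_cast
  field_simp

/-- Let `Ω ⊂ ℝ^N` be open, `u ∈ C²(Ω)`, `p` differentiable at `x ∈ Ω` and
`∇u(x) ≠ 0`. Then the vector field `V(z) = |∇u(z)|^{p(z)−2}∇u(z)` is differentiable at `x`
and its divergence at `x` (the `p(x)`-Laplacian) equals
`|∇u(x)|^{p(x)−2} { Δu(x) + ((p(x)−2)/|∇u(x)|²) ⟨D²u(x)∇u(x), ∇u(x)⟩ + log|∇u(x)| ⟨∇p(x), ∇u(x)⟩ }`. -/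
theorem stmt_6 (N : ℕ) (Ω : Set (EuclideanSpace ℝ (Fin N))) (hΩ : IsOpen Ω)
    (u p : EuclideanSpace ℝ (Fin N) → ℝ) (hu : ContDiffOn ℝ 2 u Ω)
    (x : EuclideanSpace ℝ (Fin N)) (hx : x ∈ Ω)
    (hp : DifferentiableAt ℝ p x) (hg : gradient u x ≠ 0) :
    DifferentiableAt ℝ
        (fun z => (‖gradient u z‖ ^ (p z - 2)) • gradient u z) x ∧
      (∑ i : Fin N,
          ⟪fderiv ℝ (fun z => (‖gradient u z‖ ^ (p z - 2)) • gradient u z) x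
              (EuclideanSpace.single i (1 : ℝ)), EuclideanSpace.single i (1 : ℝ)⟫) =
        ‖gradient u x‖ ^ (p x - 2) *
          ( (∑ i : Fin N, ⟪fderiv ℝ (gradient u) x (EuclideanSpace.single i (1 : ℝ)),
                EuclideanSpace.single i (1 : ℝ)⟫)
            + ((p x - 2) / ‖gradient u x‖ ^ 2) *
                ⟪fderiv ℝ (gradient u) x (gradient u x), gradient u x⟫
            + Real.log ‖gradient u x‖ * ⟪gradient p x, gradient u x⟫ ) := by
  have hG := differentiableAt_gradient_of_contDiffAt (hu.contDiffAt (hΩ.mem_nhds hx))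
  obtain ⟨hφ, hφ'⟩ := differentiableAt_norm_rpow_and_fderiv hG hp hg
  refine ⟨hφ.smul hG, ?_⟩
  have hpg : ⟪gradient p x, gradient u x⟫ = fderiv ℝ p x (gradient u x) := by
    simp [gradient]
  -- Expanding `∇u(x)` in the standard basis turns the trace of the rank-one part of `DV(x)`
  -- into the derivative of the scalar factor along `∇u(x)`.
  have htr : ∀ L : EuclideanSpace ℝ (Fin N) →L[ℝ] ℝ, ∀ v : EuclideanSpace ℝ (Fin N),
      ∑ i, L (EuclideanSpace.single i (1 : ℝ)) * ⟪v, EuclideanSpace.single i (1 : ℝ)⟫ = L v := by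
    intro L v
    conv_rhs => rw [← (EuclideanSpace.basisFun (Fin N) ℝ).sum_repr v]
    simp [mul_comm, EuclideanSpace.inner_single_right]
  rw [fderiv_fun_smul hφ hG]
  simp only [add_apply, smul_apply,
    ContinuousLinearMap.smulRight_apply, inner_add_left, real_inner_smul_left,
    Finset.sum_add_distrib, ← Finset.mul_sum]
  rw [htr, hφ', hpg]
  ring
end

section
/- Let Ω ⊂ ℝ^N be open and let u : Ω → [0, ∞) be continuous, Lipschitz with constant C_Lip, and non-degenerate with constants c > 0 and r₀ > 0, meaning sup_{B_r(x)} u ≥ c·r for every x ∈ Ω ∩ ∂{u > 0} and every 0 < r ≤ r₀ with B_r(x) ⊂ Ω. Then there exists a constant c̃ ∈ (0,1), depending only on N, C_Lip and c, such that for every ball B_r(x₀) ⊂ Ω centered at a free boundary point x₀ ∈ ∂{u > 0} with r ≤ r₀, the Lebesgue measure satisfies |B_r(x₀) ∩ {u > 0}| ≥ c̃ |B_r(x₀)|. -/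
open MeasureTheory Metric

/-!
Non-degeneracy on the half ball `B_{r/2}(x₀)` gives a point `y` there with `u y > c r / 4`.
By the Lipschitz bound, `u` stays positive on `B_{κ r}(y)` with
`κ = min (1/2) (c / (4 (C_Lip + 1)))`, and this ball lies inside `B_r(x₀)` because `κ ≤ 1/2`.
Scaling of Lebesgue measure gives `|B_{κ r}(y)| = κ ^ N |B_r(x₀)|`.
-/

/-- Let `Ω ⊂ ℝ^N` be open and `u : Ω → [0,∞)` continuous, Lipschitz with
constant `C_Lip`, and non-degenerate with constants `c > 0`, `r₀ > 0` (i.e.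
`sup_{B_r(x)} u ≥ c·r` for every free boundary point `x` and `0 < r ≤ r₀` with
`B_r(x) ⊂ Ω`). Then there is `c̃ ∈ (0,1)`, depending only on `N`, `C_Lip` and `c`, such
that for every ball `B_r(x₀) ⊂ Ω` centered at a free boundary point with `r ≤ r₀`,
`|B_r(x₀) ∩ {u > 0}| ≥ c̃ |B_r(x₀)|`. -/
theorem stmt_9 (N : ℕ) (CLip : NNReal) (c : ℝ) (hc : 0 < c) :
    ∃ ctil : ℝ, 0 < ctil ∧ ctil < 1 ∧
      ∀ (Ω : Set (EuclideanSpace ℝ (Fin N))), IsOpen Ω →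
      ∀ u : EuclideanSpace ℝ (Fin N) → ℝ,
        ContinuousOn u Ω → (∀ x ∈ Ω, 0 ≤ u x) → LipschitzOnWith CLip u Ω →
        ∀ r₀ : ℝ, 0 < r₀ →
        (∀ x ∈ Ω ∩ frontier {y ∈ Ω | 0 < u y}, ∀ r : ℝ, 0 < r → r ≤ r₀ →
          ball x r ⊆ Ω → c * r ≤ sSup (u '' ball x r)) →
        ∀ x₀ ∈ Ω ∩ frontier {y ∈ Ω | 0 < u y}, ∀ r : ℝ, 0 < r → r ≤ r₀ →
          ball x₀ r ⊆ Ω →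
          ENNReal.ofReal ctil * volume (ball x₀ r) ≤
            volume (ball x₀ r ∩ {y ∈ Ω | 0 < u y}) := by
  obtain ⟨κ, hκ⟩ : ∃ κ : ℝ, κ = min (1 / 2) (c / (4 * ((CLip : ℝ) + 1))) := ⟨_, rfl⟩
  have hC : (0 : ℝ) ≤ CLip := CLip.coe_nonneg
  have hκ0 : 0 < κ := by rw [hκ]; positivity
  have hκ2 : κ ≤ 1 / 2 := hκ ▸ min_le_left _ _
  have hκC : κ * (4 * ((CLip : ℝ) + 1)) ≤ c :=
    (le_div_iff₀ (by positivity)).1 (hκ ▸ min_le_right _ _)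
  have hpow : κ ^ N ≤ 1 := pow_le_one₀ hκ0.le (by linarith)
  have hpow0 : 0 < κ ^ N := by positivity
  -- The factor `1 / 2` keeps the constant strictly below `1` when `N = 0`.
  refine ⟨κ ^ N / 2, by positivity, by linarith, ?_⟩
  intro Ω _ u _ _ hLip r₀ _ hnd x₀ hx₀ r hr hrr₀ hball
  have hhalf : ball x₀ (r / 2) ⊆ Ω := (ball_subset_ball (by linarith)).trans hball
  have hsup := hnd x₀ hx₀ (r / 2) (by linarith) (by linarith) hhalf
  have hne : (u '' ball x₀ (r / 2)).Nonempty :=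
    (nonempty_ball.2 (by linarith)).image u
  have hcr : 0 < c * r := mul_pos hc hr
  obtain ⟨_, ⟨y, hy, rfl⟩, huy⟩ :=
    exists_lt_of_lt_csSup hne (show c * r / 4 < _ by linarith)
  have hyr : ball y (κ * r) ⊆ ball x₀ r := by
    apply ball_subset_ball'
    have := mem_ball.1 hy
    nlinarith
  have hsub : ball y (κ * r) ⊆ ball x₀ r ∩ {z ∈ Ω | 0 < u z} := by
    intro z hz
    have hzΩ := hball (hyr hz)
    refine ⟨hyr hz, hzΩ, ?_⟩
    have h1 := hLip.dist_le_mul z hzΩ y (hhalf hy)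
    rw [Real.dist_eq] at h1
    have h2 := (abs_le.1 h1).1
    have h3 : (CLip : ℝ) * dist z y ≤ CLip * (κ * r) :=
      mul_le_mul_of_nonneg_left (mem_ball.1 hz).le hC
    have h4 := mul_le_mul_of_nonneg_right hκC hr.le
    have h5 : 0 < κ * r := mul_pos hκ0 hr
    linarith
  calc ENNReal.ofReal (κ ^ N / 2) * volume (ball x₀ r)
      ≤ ENNReal.ofReal (κ ^ N) * volume (ball x₀ r) := by
        gcongr
        linarith
    _ = volume (ball y (κ * r)) := by
        rw [Measure.addHaar_ball_mul_of_pos volume y hκ0 r, finrank_euclideanSpace_fin,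
          Measure.addHaar_ball_center volume x₀ r]
    _ ≤ _ := measure_mono hsub
end

section
/- Let Ω ⊂ ℝ^N be open, p : Ω → ℝ Lipschitz continuous with 1 < p_min ≤ p(x) ≤ p_max < ∞ (so ∇p exists a.e.), and let u ∈ C²(Ω) satisfy 0 < c₁ ≤ |∇u(x)| ≤ c₂ < ∞ in Ω and be a weak solution of Δ_{p(x)}u = 0 in Ω, i.e. ∫_Ω |∇u|^{p(x)−2}∇u · ∇η dx = 0 for all η ∈ C_c^∞(Ω). Then v = |∇u| satisfies, for every nonnegative ψ ∈ C_c^∞(Ω), the inequality −∫_Ω D_{ij}(x) v_{x_j} ψ_{x_i} dx ≥ ∫_Ω H(x) · ∇ψ dx + ∫_Ω (B(x) · ∇v) ψ dx, where D_{ij}(x) = |∇u|^{p(x)−1} ( δ_{ij} + ((p(x)−2)/|∇u|²) u_{x_i} u_{x_j} ), H(x) = |∇u|^{p(x)−2} log|∇u| ⟨∇u, ∇p⟩ ∇u, and B(x) = |∇u|^{p(x)−1} log|∇u| ∇p; that is, v is a weak subsolution of − div(D∇v) + B·∇v ≤ div H in Ω. -/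
open scoped RealInnerProductSpace
open MeasureTheory

/-!
Write `g = ∇u`, `v = |g|` and let `F = v ^ (p - 2) g` be the flux, a locally Lipschitz vector field
whose weak divergence vanishes. The argument differentiates the equation in each direction `eₖ`
and tests the result with `ζₖ = gₖ ψ`, which is `C¹` with compact support.

As `F` is only Lipschitz and `ζₖ` only `C¹`, the differentiated equation is obtained from the
identity `∫ ∂ₖf ∂ᵢζ = ∫ ∂ᵢf ∂ₖζ` for Lipschitz functions of compact support
(`integral_lineDeriv_mul_lineDeriv_comm`), applied to the components of a localized flux `G = χ F`
with `χ = 1` near the support of `ψ`. Indeed `div G = 0` almost everywhere there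
(`ae_divergence_eq_zero`), so `∑ₖ ∑ᵢ ∫ ∂ₖGᵢ ∂ᵢζₖ = ∑ₖ ∫ (div G) ∂ₖζₖ = 0`
(`integral_lineDeriv_pairing_eq_zero`).

Expanding `∂ₖFᵢ` (`lineDeriv_flux`) and using the symmetry of `D²u` together with
`v ∂ₖv = ∑ₗ gₗ ∂ₖgₗ`, the integrand becomes, almost everywhere,
`⟨D∇v + H, ∇ψ⟩ + (B·∇v) ψ + ψ v ^ (p - 2) (|D²u|² + (p - 2)|∇v|²)`. The last term is nonnegative
because `|∇v|² ≤ |D²u|²` and `p > 1` (`sum_inequality`).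
-/

/-! ### Lipschitz vector fields with vanishing divergence -/

section General
variable {E : Type*} [NormedAddCommGroup E] [NormedSpace ℝ E]

lemma lineDeriv_zero_of_notMem_tsupport {f : E → ℝ} {x : E} (hx : x ∉ tsupport f) (v : E) :
    lineDeriv ℝ f x v = 0 := by
  have h : f =ᶠ[nhds x] (fun _ => (0 : ℝ)) := notMem_tsupport_iff_eventuallyEq.mp hx
  rw [h.lineDeriv_eq]
  simp [lineDeriv]

variable [FiniteDimensional ℝ E] [MeasurableSpace E] [BorelSpace E]
  {μ : Measure E} [μ.IsAddHaarMeasure]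

lemma integrable_lineDeriv {f : E → ℝ} {C : NNReal} (hf : LipschitzWith C f)
    (hfc : HasCompactSupport f) (v : E) : Integrable (fun x => lineDeriv ℝ f x v) μ := by
  have h1 := (hf.locallyIntegrable_lineDeriv (μ := μ) v).integrableOn_isCompact hfc.isCompact
  refine (integrableOn_iff_integrable_of_support_subset ?_).mp h1
  intro x hx
  by_contra hxs
  exact hx (lineDeriv_zero_of_notMem_tsupport hxs v)

/-- Weak mixed second derivatives commute. The difference quotient of `f` in direction `v` is
integrated by parts in direction `w`, a translation moves the difference quotient to `ζ`, and the
step size tends to `0`. -/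
lemma integral_lineDeriv_mul_lineDeriv_comm {f ζ : E → ℝ} {C D : NNReal}
    (hf : LipschitzWith C f) (hfc : HasCompactSupport f)
    (hζ : LipschitzWith D ζ) (hζc : HasCompactSupport ζ) (v w : E) :
    ∫ x, lineDeriv ℝ f x v * lineDeriv ℝ ζ x w ∂μ =
      ∫ x, lineDeriv ℝ f x w * lineDeriv ℝ ζ x v ∂μ := by
  have A := hf.integral_inv_smul_sub_mul_tendsto_integral_lineDeriv_mul (μ := μ)
    (integrable_lineDeriv hζ hζc w) v
  have B := hζ.integral_inv_smul_sub_mul_tendsto_integral_lineDeriv_mul (μ := μ)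
    (integrable_lineDeriv hf hfc (-w)) (-v)
  have S1 : ∀ t : ℝ, ∫ x, (t⁻¹ • (f (x + t • v) - f x)) * lineDeriv ℝ ζ x w ∂μ =
      ∫ x, (t⁻¹ • (ζ (x + t • (-v)) - ζ x)) * lineDeriv ℝ f x (-w) ∂μ := by
    intro t
    let ζt : E → ℝ := fun x => ζ (x + t • (-v))
    have hζtc : HasCompactSupport ζt := hζc.comp_homeomorph (Homeomorph.addRight (t • (-v)))
    have hζt : LipschitzWith D ζt := by
      refine LipschitzWith.of_dist_le_mul fun x y => ?_
      simpa [ζt] using hζ.dist_le_mul (x + t • (-v)) (y + t • (-v))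
    have hd : ∀ x, lineDeriv ℝ ζt x w = lineDeriv ℝ ζ (x + t • (-v)) w := by
      intro x
      simp only [lineDeriv, ζt]
      congr 1; ext s; congr 1; abel
    have S3 : ∫ x, f (x + t • v) * lineDeriv ℝ ζ x w ∂μ = ∫ x, f x * lineDeriv ℝ ζt x w ∂μ := by
      rw [← integral_add_right_eq_self _ (t • (-v))]; simp [hd]
    have S4 : ∀ (z : E → ℝ), LipschitzWith D z → HasCompactSupport z →
        ∫ x, f x * lineDeriv ℝ z x w ∂μ = ∫ x, z x * lineDeriv ℝ f x (-w) ∂μ := by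
      intro z hz hzc
      have := hf.integral_lineDeriv_mul_eq (μ := μ) hz hzc (-w)
      rw [neg_neg] at this
      simp only [mul_comm (f _), mul_comm (z _), this]
    have I1 : ∀ (z : E → ℝ), LipschitzWith D z → HasCompactSupport z → ∀ h : E → ℝ, Continuous h →
        HasCompactSupport h → Integrable (fun x => h x * lineDeriv ℝ z x w) μ := by
      intro z hz hzc h hh hhc
      exact (hh.integrable_of_hasCompactSupport hhc).mul_of_top_left (hz.memLp_lineDeriv w)
    have I2 : ∀ h : E → ℝ, Continuous h →
        HasCompactSupport h → Integrable (fun x => h x * lineDeriv ℝ f x (-w)) μ := by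
      intro h hh hhc
      exact (hh.integrable_of_hasCompactSupport hhc).mul_of_top_left (hf.memLp_lineDeriv _)
    suffices S2 : ∫ x, (f (x + t • v) - f x) * lineDeriv ℝ ζ x w ∂μ =
        ∫ x, (ζ (x + t • (-v)) - ζ x) * lineDeriv ℝ f x (-w) ∂μ by
      simp only [smul_eq_mul, mul_assoc, integral_const_mul, S2]
    simp_rw [_root_.sub_mul]
    rw [integral_sub, integral_sub, S3, S4 _ hζ hζc, S4 _ hζt hζtc]
    · exact I2 _ hζt.continuous hζtc
    · exact I2 _ hζ.continuous hζc
    · exact I1 _ hζ hζc _ (hf.continuous.comp (continuous_add_const _))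
        (hfc.comp_homeomorph (Homeomorph.addRight (t • v)))
    · exact I1 _ hζ hζc _ hf.continuous hfc
  simp only [S1] at A
  rw [tendsto_nhds_unique A B]
  simp only [lineDeriv_neg, neg_mul_neg, mul_comm (lineDeriv ℝ f _ _)]

variable {ι : Type*} [Fintype ι]

/-- A Lipschitz vector field that is weakly divergence free in `V` has zero pointwise divergence
almost everywhere in `V`. -/
lemma ae_divergence_eq_zero {G : ι → E → ℝ} {C : ι → NNReal} {e : ι → E}
    (hG : ∀ i, LipschitzWith (C i) (G i)) {V : Set E} (hV : IsOpen V)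
    (h : ∀ η : E → ℝ, ContDiff ℝ (⊤ : ℕ∞) η → HasCompactSupport η → tsupport η ⊆ V →
      ∫ x, ∑ i, G i x * lineDeriv ℝ η x (e i) ∂μ = 0) :
    ∀ᵐ x ∂μ, x ∈ V → ∑ i, lineDeriv ℝ (G i) x (e i) = 0 := by
  refine hV.ae_eq_zero_of_integral_contDiff_smul_eq_zero ?_ ?_
  · refine LocallyIntegrable.locallyIntegrableOn ?_ _
    exact locallyIntegrable_finsetSum _ fun i _ => (hG i).locallyIntegrable_lineDeriv _
  intro η hη hηc hηV
  obtain ⟨D, hD⟩ := ContDiff.lipschitzWith_of_hasCompactSupport hηc hη (by simp)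
  have h1 := h η hη hηc hηV
  have hint : Integrable η μ := hη.continuous.integrable_of_hasCompactSupport hηc
  simp only [smul_eq_mul, Finset.mul_sum]
  rw [integral_finsetSum]
  · rw [integral_finsetSum] at h1
    · rw [← neg_eq_zero, ← h1, ← Finset.sum_neg_distrib]
      refine Finset.sum_congr rfl fun i _ => ?_
      have := (hG i).integral_lineDeriv_mul_eq (μ := μ) hD hηc (e i)
      simp only [lineDeriv_neg, neg_mul, integral_neg] at this
      simp only [mul_comm (η _), mul_comm (G i _), this, neg_neg]
    · intro i _
      have : Continuous fun x => lineDeriv ℝ η x (e i) := by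
        simp_rw [(hη.differentiable (by simp)).differentiableAt.lineDeriv_eq_fderiv]
        exact (hη.continuous_fderiv (by simp)).clm_apply continuous_const
      refine ((hG i).continuous.mul this).integrable_of_hasCompactSupport ?_
      refine HasCompactSupport.mul_left ?_
      refine HasCompactSupport.intro hηc fun x hx => lineDeriv_zero_of_notMem_tsupport hx _
  · intro i _
    exact hint.mul_of_top_left ((hG i).memLp_lineDeriv _)

/-- The differentiated equation: for `G` weakly divergence free in `V`, each derivative `∂ₖG` is
again weakly divergence free, even against Lipschitz test functions `ζ k` supported in `V`. -/
lemma integral_lineDeriv_pairing_eq_zero {G ζ : ι → E → ℝ} {C D : ι → NNReal} {e : ι → E}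
    (hG : ∀ i, LipschitzWith (C i) (G i)) (hGc : ∀ i, HasCompactSupport (G i))
    (hζ : ∀ i, LipschitzWith (D i) (ζ i)) (hζc : ∀ i, HasCompactSupport (ζ i))
    {V : Set E} (hV : IsOpen V) (hζV : ∀ i, tsupport (ζ i) ⊆ V)
    (h : ∀ η : E → ℝ, ContDiff ℝ (⊤ : ℕ∞) η → HasCompactSupport η → tsupport η ⊆ V →
      ∫ x, ∑ i, G i x * lineDeriv ℝ η x (e i) ∂μ = 0) :
    Integrable (fun x => ∑ k, ∑ i, lineDeriv ℝ (G i) x (e k) * lineDeriv ℝ (ζ k) x (e i)) μ ∧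
    ∫ x, ∑ k, ∑ i, lineDeriv ℝ (G i) x (e k) * lineDeriv ℝ (ζ k) x (e i) ∂μ = 0 := by
  have hint : ∀ i k (v w : E),
      Integrable (fun x => lineDeriv ℝ (G i) x v * lineDeriv ℝ (ζ k) x w) μ := fun i k v w =>
    (integrable_lineDeriv (hG i) (hGc i) v).mul_of_top_left ((hζ k).memLp_lineDeriv w)
  refine ⟨integrable_finsetSum _ fun k _ => integrable_finsetSum _ fun i _ => hint _ _ _ _, ?_⟩
  rw [integral_finsetSum _ fun k _ => integrable_finsetSum _ fun i _ => hint _ _ _ _]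
  refine Finset.sum_eq_zero fun k _ => ?_
  rw [integral_finsetSum _ fun i _ => hint _ _ _ _]
  simp_rw [fun i => integral_lineDeriv_mul_lineDeriv_comm (μ := μ) (hG i) (hGc i) (hζ k) (hζc k)
    (e k) (e i)]
  rw [← integral_finsetSum _ fun i _ => hint _ _ _ _]
  refine integral_eq_zero_of_ae ?_
  filter_upwards [ae_divergence_eq_zero (μ := μ) hG hV h] with x hx
  rw [← Finset.sum_mul]
  by_cases hxV : x ∈ V
  · simp [hx hxV]
  · simp [lineDeriv_zero_of_notMem_tsupport fun hx' => hxV (hζV k hx')]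

end General

/-! ### The pointwise inequality -/

/-- The algebra at a single point, with `g = ∇u`, `w = ∇v`, `P = ∇p`, `s = ∇ψ`, `h l k = ∂ₖgₗ`,
`a = v ^ (p - 2)`, `q = p x` and `ℓ = log v`. The two sides differ by
`a ψ (|h|² + (q - 2)|w|²) ≥ 0`. -/
lemma sum_inequality {ι : Type*} [Fintype ι] [DecidableEq ι] (g w P s : ι → ℝ) (h : ι → ι → ℝ)
    (hsymm : ∀ i j, h i j = h j i) {v a q ℓ ψ : ℝ} (hv : 0 < v) (ha : 0 < a) (hq : 1 < q)
    (hψ : 0 ≤ ψ) (hvg : v ^ 2 = ∑ i, g i ^ 2) (hw : ∀ k, v * w k = ∑ l, g l * h l k) :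
    (a * ℓ * ∑ i, g i * P i) * (∑ i, g i * s i) + (a * v * ℓ) * (∑ i, P i * w i) * ψ
      + ∑ i, ∑ j, (a * v * ((if i = j then (1 : ℝ) else 0) + ((q - 2) / v ^ 2) * g i * g j))
          * w j * s i
      ≤ ∑ k, ∑ i, (((q - 2) * (a / v) * w k + a * ℓ * P k) * g i + a * h i k)
          * (h k i * ψ + g k * s i) := by
  have hw' : ∀ k, ∑ l, g l * h k l = v * w k := fun k => by
    rw [hw]; exact Finset.sum_congr rfl fun l _ => by rw [hsymm]
  have hD : ∑ i, ∑ j, (a * v * ((if i = j then (1 : ℝ) else 0) + ((q - 2) / v ^ 2) * g i * g j))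
          * w j * s i = a * v * (∑ i, w i * s i)
            + (q - 2) * (a / v) * (∑ j, g j * w j) * (∑ i, g i * s i) := by
    have : ∀ i, ∑ j, (a * v * ((if i = j then (1 : ℝ) else 0) + ((q - 2) / v ^ 2) * g i * g j))
          * w j * s i = a * v * (w i * s i)
            + (q - 2) * (a / v) * (∑ j, g j * w j) * (g i * s i) := by
      intro i
      have : ∀ j, (a * v * ((if i = j then (1 : ℝ) else 0) + ((q - 2) / v ^ 2) * g i * g j))
          * w j * s i = (if i = j then a * v * (w j * s i) else 0)
            + (q - 2) * (a / v) * (g j * w j) * (g i * s i) := by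
        intro j
        split_ifs
        · field_simp
        · field_simp
          ring
      rw [Finset.sum_congr rfl fun j _ => this j, Finset.sum_add_distrib, Finset.sum_ite_eq]
      simp only [Finset.mem_univ, if_true, ← Finset.sum_mul, ← Finset.mul_sum]
    rw [Finset.sum_congr rfl fun i _ => this i, Finset.sum_add_distrib, ← Finset.mul_sum,
      ← Finset.mul_sum]
  have hR : ∑ k, ∑ i, (((q - 2) * (a / v) * w k + a * ℓ * P k) * g i + a * h i k)
          * (h k i * ψ + g k * s i) =
      a * ψ * ((∑ k, ∑ i, h i k ^ 2) + (q - 2) * ∑ k, w k ^ 2) + (a * v * ℓ) * (∑ i, P i * w i) * ψ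
        + (a * v * (∑ i, w i * s i) + (q - 2) * (a / v) * (∑ j, g j * w j) * (∑ i, g i * s i))
        + (a * ℓ * ∑ i, g i * P i) * (∑ i, g i * s i) := by
    have h1 : ∀ k, ∑ i, (((q - 2) * (a / v) * w k + a * ℓ * P k) * g i + a * h i k)
          * (h k i * ψ + g k * s i) = a * ψ * (∑ i, h i k ^ 2)
          + ((q - 2) * (a / v) * w k + a * ℓ * P k) * ψ * (∑ i, g i * h k i)
          + ((q - 2) * (a / v) * w k + a * ℓ * P k) * g k * (∑ i, g i * s i)
          + ∑ i, a * (g k * h i k * s i) := by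
      intro k
      simp only [Finset.mul_sum, ← Finset.sum_add_distrib]
      refine Finset.sum_congr rfl fun i _ => ?_
      rw [hsymm k i]; ring
    have h2 : ∑ k, ∑ i, a * (g k * h i k * s i) = a * v * (∑ i, w i * s i) := by
      rw [Finset.sum_comm, Finset.mul_sum]
      refine Finset.sum_congr rfl fun i _ => ?_
      rw [← Finset.mul_sum, ← Finset.sum_mul, hw']; ring
    rw [Finset.sum_congr rfl fun k _ => h1 k]
    simp only [hw']
    rw [Finset.sum_add_distrib, h2, Finset.sum_add_distrib, Finset.sum_add_distrib,
      ← Finset.mul_sum, ← Finset.sum_mul]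
    have h3 : ∑ k, ((q - 2) * (a / v) * w k + a * ℓ * P k) * ψ * (v * w k) =
        a * ψ * ((q - 2) * ∑ k, w k ^ 2) + (a * v * ℓ) * (∑ i, P i * w i) * ψ := by
      simp only [Finset.mul_sum, Finset.sum_mul, ← Finset.sum_add_distrib]
      refine Finset.sum_congr rfl fun i _ => ?_
      field_simp
    have h4 : ∑ k, ((q - 2) * (a / v) * w k + a * ℓ * P k) * g k =
        (q - 2) * (a / v) * (∑ j, g j * w j) + (a * ℓ * ∑ i, g i * P i) := by
      simp only [Finset.mul_sum, ← Finset.sum_add_distrib]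
      refine Finset.sum_congr rfl fun i _ => ?_
      ring
    rw [h3, h4]; ring
  -- Kato's inequality `|∇v|² ≤ |D²u|²`, by Cauchy–Schwarz in each column of `h`
  have hK : ∑ k, w k ^ 2 ≤ ∑ k, ∑ i, h i k ^ 2 := by
    refine Finset.sum_le_sum fun k _ => ?_
    have := Finset.sum_mul_sq_le_sq_mul_sq Finset.univ g (fun l => h l k)
    rw [← hw, ← hvg, mul_pow] at this
    exact le_of_mul_le_mul_left this (by positivity)
  have hw0 : 0 ≤ ∑ k, w k ^ 2 := Finset.sum_nonneg fun _ _ => sq_nonneg _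
  have : 0 ≤ a * ψ * ((∑ k, ∑ i, h i k ^ 2) + (q - 2) * ∑ k, w k ^ 2) := by
    refine mul_nonneg (by positivity) ?_
    nlinarith
  rw [hD, hR]
  linarith

/-! ### Localization and derivatives of the flux in `ℝ^N` -/

section Euclid
variable {N : ℕ}

local notation "𝔼" => EuclideanSpace ℝ (Fin N)

lemma gradient_coord (f : 𝔼 → ℝ) (x : 𝔼) (i : Fin N) :
    gradient f x i = fderiv ℝ f x (EuclideanSpace.single i 1) := by
  rw [← inner_gradient_left, EuclideanSpace.inner_single_right]; simp

lemma inner_coord (a b : 𝔼) : ⟪a, b⟫ = ∑ i, a i * b i := by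
  simp [PiLp.inner_apply, mul_comm]

lemma inner_single_one (a : 𝔼) (i : Fin N) : ⟪a, EuclideanSpace.single i (1 : ℝ)⟫ = a i := by
  rw [EuclideanSpace.inner_single_right]; simp

lemma exists_cutoff {F : Type*} [NormedAddCommGroup F] [NormedSpace ℝ F] [FiniteDimensional ℝ F]
    {K Ω : Set F} (hK : IsCompact K) (hΩ : IsOpen Ω) (h : K ⊆ Ω) :
    ∃ χ : F → ℝ, ContDiff ℝ 1 χ ∧ HasCompactSupport χ ∧ tsupport χ ⊆ Ω ∧
      ∀ᶠ x in nhdsSet K, χ x = 1 := by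
  obtain ⟨K', hK', h1, h2⟩ := exists_compact_between hK hΩ h
  obtain ⟨χ, hχ1, hχ0, -⟩ := exists_contMDiffMap_one_nhds_of_subset_interior
    (n := 1) (modelWithCornersSelf ℝ F) hK.isClosed h1
  have hs : tsupport χ ⊆ K' := closure_minimal (fun x hx => by
    by_contra hxK; exact hx (hχ0 x hxK)) hK'.isClosed
  exact ⟨χ, χ.contMDiff.contDiff, hK'.of_isClosed_subset (isClosed_tsupport _) hs,
    hs.trans h2, hχ1⟩

lemma contDiff_mul_of_tsupport_subset {F : Type*} [NormedAddCommGroup F] [NormedSpace ℝ F]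
    {f ρ : F → ℝ} {Ω : Set F} (hΩ : IsOpen Ω) (hf : ContDiffOn ℝ 1 f Ω) (hρ : ContDiff ℝ 1 ρ)
    (hρΩ : tsupport ρ ⊆ Ω) : ContDiff ℝ 1 (fun x => f x * ρ x) := by
  rw [contDiff_iff_contDiffAt]
  intro x
  by_cases hx : x ∈ Ω
  · exact (hf.contDiffAt (hΩ.mem_nhds hx)).mul hρ.contDiffAt
  · have h0 : ρ =ᶠ[nhds x] 0 := notMem_tsupport_iff_eventuallyEq.mp fun h => hx (hρΩ h)
    refine (contDiffAt_const (c := (0 : ℝ))).congr_of_eventuallyEq ?_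
    filter_upwards [h0] with y hy
    simp [hy]

lemma integrable_mul_of_tsupport_subset {f ρ b : 𝔼 → ℝ} {Ω : Set 𝔼} (hΩ : IsOpen Ω)
    (hf : ContinuousOn f Ω) (hρ : Continuous ρ) (hρc : HasCompactSupport ρ)
    (hρΩ : tsupport ρ ⊆ Ω) (hb : MemLp b ⊤ volume) :
    Integrable (fun x => f x * ρ x * b x) := by
  have hc : Continuous (fun x => f x * ρ x) := by
    rw [continuous_iff_continuousAt]
    intro x
    by_cases hx : x ∈ Ω
    · exact (hf.continuousAt (hΩ.mem_nhds hx)).mul hρ.continuousAt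
    · have h0 : ρ =ᶠ[nhds x] 0 := notMem_tsupport_iff_eventuallyEq.mp fun h => hx (hρΩ h)
      refine (continuousAt_const (y := (0 : ℝ))).congr ?_
      filter_upwards [h0] with y hy
      simp [hy]
  exact (hc.integrable_of_hasCompactSupport hρc.mul_left).mul_of_top_left hb

/-- The localized flux is Lipschitz. It is the composition of the Lipschitz map `x ↦ (q x, x)` with
`(s, x) ↦ θ s * χ x * ‖g x‖ ^ (s - 2) * g x i`, which is `C¹` with compact support once `θ` cuts off
the exponent variable outside the range of `q` on the support of `χ`. -/
lemma exists_lipschitz_flux {Ω : Set 𝔼} (hΩ : IsOpen Ω) {g : 𝔼 → 𝔼} (hg : ContDiffOn ℝ 1 g Ω)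
    (hg0 : ∀ x ∈ Ω, g x ≠ 0) {q χ : 𝔼 → ℝ} {L : NNReal} (hq : LipschitzWith L q)
    (hχ : ContDiff ℝ 1 χ) (hχc : HasCompactSupport χ) (hχΩ : tsupport χ ⊆ Ω) (i : Fin N) :
    ∃ C, LipschitzWith C (fun x => ‖g x‖ ^ (q x - 2) * g x i * χ x) := by
  obtain ⟨θ, hθ, hθc, -, hθ1⟩ := exists_cutoff (hχc.isCompact.image hq.continuous)
    isOpen_univ (Set.subset_univ _)
  let ρ : ℝ × 𝔼 → ℝ := fun z => θ z.1 * χ z.2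
  have hρ : ContDiff ℝ 1 ρ := (hθ.comp contDiff_fst).mul (hχ.comp contDiff_snd)
  have hρs : tsupport ρ ⊆ tsupport θ ×ˢ tsupport χ := by
    refine closure_minimal (fun z hz => ?_) ((isClosed_tsupport _).prod (isClosed_tsupport _))
    exact ⟨subset_tsupport _ (left_ne_zero_of_mul hz), subset_tsupport _ (right_ne_zero_of_mul hz)⟩
  have hρc : HasCompactSupport ρ :=
    (hθc.isCompact.prod hχc.isCompact).of_isClosed_subset (isClosed_tsupport _) hρs
  let f : ℝ × 𝔼 → ℝ := fun z => ‖g z.2‖ ^ (z.1 - 2) * g z.2 i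
  have hf : ContDiffOn ℝ 1 f (Set.univ ×ˢ Ω) := by
    intro z hz
    have hgz : ContDiffWithinAt ℝ 1 (fun z : ℝ × 𝔼 => g z.2) (Set.univ ×ˢ Ω) z :=
      ((hg.contDiffAt (hΩ.mem_nhds hz.2)).comp z contDiffAt_snd).contDiffWithinAt
    refine ContDiffWithinAt.mul ?_ (contDiffWithinAt_euclidean.mp hgz i)
    refine (hgz.norm ℝ (hg0 _ hz.2)).rpow (by fun_prop) ?_
    exact norm_ne_zero_iff.mpr (hg0 _ hz.2)
  have hfρ := contDiff_mul_of_tsupport_subset (isOpen_univ.prod hΩ) hf hρ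
    fun z hz => ⟨trivial, hχΩ (hρs hz).2⟩
  obtain ⟨C, hC⟩ := hfρ.lipschitzWith_of_hasCompactSupport hρc.mul_left one_ne_zero
  have hcomp := hC.comp (hq.prodMk LipschitzWith.id)
  refine ⟨C * max L 1, fun x y => ?_⟩
  have key : ∀ x, ‖g x‖ ^ (q x - 2) * g x i * χ x = (f * ρ) (q x, x) := by
    intro x
    by_cases hx : x ∈ tsupport χ
    · have : θ (q x) = 1 := hθ1.self_of_nhdsSet _ (Set.mem_image_of_mem _ hx)
      simp [f, ρ, this]
    · simp [f, ρ, image_eq_zero_of_notMem_tsupport hx]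
  simp only [key]
  exact hcomp x y

lemma hasFDerivAt_coord {g : 𝔼 → 𝔼} {x : 𝔼} (hg : DifferentiableAt ℝ g x) (i : Fin N) :
    HasFDerivAt (fun y => g y i) ((EuclideanSpace.proj i : 𝔼 →L[ℝ] ℝ).comp (fderiv ℝ g x)) x :=
  (EuclideanSpace.proj i : 𝔼 →L[ℝ] ℝ).hasFDerivAt.comp x hg.hasFDerivAt

/-- `v ∂ₖv = ∑ₗ gₗ ∂ₖgₗ` for `v = |g|`, from differentiating `v² = |g|²`. -/
lemma norm_mul_gradient_norm {g : 𝔼 → 𝔼} {x : 𝔼} (hg : DifferentiableAt ℝ g x) (hg0 : g x ≠ 0)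
    (k : Fin N) : ‖g x‖ * gradient (fun z => ‖g z‖) x k =
      ∑ l, g x l * fderiv ℝ g x (EuclideanSpace.single k 1) l := by
  have hv : DifferentiableAt ℝ (fun z => ‖g z‖) x := hg.norm ℝ hg0
  have h1 := hg.hasFDerivAt.norm_sq
  have h2 := hv.hasFDerivAt.pow 2
  have h3 := congrArg (fun T => T (EuclideanSpace.single k 1)) (h2.unique h1)
  simp only [nsmul_eq_mul, Nat.cast_ofNat, smul_apply,
    ContinuousLinearMap.comp_apply, innerSL_apply_apply, smul_eq_mul] at h3
  rw [inner_coord] at h3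
  rw [gradient_coord]
  norm_num at h3
  linarith

lemma lineDeriv_flux {g : 𝔼 → 𝔼} {x : 𝔼} (hg : DifferentiableAt ℝ g x) (hg0 : g x ≠ 0)
    {q χ : 𝔼 → ℝ} (hq : DifferentiableAt ℝ q x) (hχ : ∀ᶠ y in nhds x, χ y = 1) (i k : Fin N) :
    lineDeriv ℝ (fun y => ‖g y‖ ^ (q y - 2) * g y i * χ y) x (EuclideanSpace.single k 1) =
      ((q x - 2) * (‖g x‖ ^ (q x - 2) / ‖g x‖) * gradient (fun z => ‖g z‖) x k
        + ‖g x‖ ^ (q x - 2) * Real.log ‖g x‖ * gradient q x k) * g x i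
      + ‖g x‖ ^ (q x - 2) * fderiv ℝ g x (EuclideanSpace.single k 1) i := by
  have hv : DifferentiableAt ℝ (fun z => ‖g z‖) x := hg.norm ℝ hg0
  have hpos : 0 < ‖g x‖ := norm_pos_iff.mpr hg0
  have h1 := (hv.hasFDerivAt.rpow (hq.hasFDerivAt.sub_const 2) hpos).fun_mul
    (hasFDerivAt_coord hg i)
  have h2 : (fun y => ‖g y‖ ^ (q y - 2) * g y i * χ y) =ᶠ[nhds x]
      fun y => ‖g y‖ ^ (q y - 2) * g y i := by
    filter_upwards [hχ] with y hy
    rw [hy, mul_one]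
  rw [h2.lineDeriv_eq, h1.differentiableAt.lineDeriv_eq_fderiv]
  rw [h1.fderiv, gradient_coord, gradient_coord, Real.rpow_sub_one hpos.ne']
  simp
  ring


lemma contDiffOn_gradient {u : 𝔼 → ℝ} {Ω : Set 𝔼} (hΩ : IsOpen Ω) {m n : WithTop ℕ∞}
    (hu : ContDiffOn ℝ n u Ω) (hmn : m + 1 ≤ n) : ContDiffOn ℝ m (gradient u) Ω := by
  rw [contDiffOn_euclidean]
  intro i
  simp only [gradient_coord]
  exact (hu.fderiv_of_isOpen hΩ hmn).clm_apply contDiffOn_const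

lemma fderiv_gradient_symm {u : 𝔼 → ℝ} {x : 𝔼} (hu : ContDiffAt ℝ 2 u x)
    (hg : DifferentiableAt ℝ (gradient u) x) (i j : Fin N) :
    fderiv ℝ (gradient u) x (EuclideanSpace.single i 1) j =
      fderiv ℝ (gradient u) x (EuclideanSpace.single j 1) i := by
  have hd : DifferentiableAt ℝ (fderiv ℝ u) x :=
    (hu.fderiv_right (m := 1) (by norm_num)).differentiableAt one_ne_zero
  have key : ∀ i j : Fin N, fderiv ℝ (gradient u) x (EuclideanSpace.single i 1) j =
      fderiv ℝ (fderiv ℝ u) x (EuclideanSpace.single i 1) (EuclideanSpace.single j 1) := by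
    intro i j
    have h1 := hasFDerivAt_coord hg j
    simp only [gradient_coord] at h1
    have h2 := hd.hasFDerivAt.clm_apply (hasFDerivAt_const (EuclideanSpace.single j (1 : ℝ)) x)
    have h3 := congrArg (fun T => T (EuclideanSpace.single i 1)) (h1.unique h2)
    simpa using h3
  rw [key, key]
  exact (hu.isSymmSndFDerivAt (by simp)) _ _

end Euclid

/-! ### The subsolution inequality -/

/-- Let `Ω ⊂ ℝ^N` be open, `p` Lipschitz with
`1 < p_min ≤ p ≤ p_max < ∞`, and `u ∈ C²(Ω)` with `0 < c₁ ≤ |∇u| ≤ c₂ < ∞` a weak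
solution of `Δ_{p(x)}u = 0` in `Ω`. Then `v = |∇u|` satisfies, for every nonnegative
`ψ ∈ C_c^∞(Ω)`,
`−∫_Ω D_{ij} v_{x_j} ψ_{x_i} ≥ ∫_Ω H·∇ψ + ∫_Ω (B·∇v) ψ`, where
`D_{ij} = |∇u|^{p−1}(δ_{ij} + ((p−2)/|∇u|²) u_{x_i} u_{x_j})`,
`H = |∇u|^{p−2} log|∇u| ⟨∇u, ∇p⟩ ∇u`, `B = |∇u|^{p−1} log|∇u| ∇p`;
i.e. `v` is a weak subsolution of `−div(D∇v) + B·∇v ≤ div H` in `Ω`. -/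
theorem stmt_12 (N : ℕ) (Ω : Set (EuclideanSpace ℝ (Fin N))) (hΩ : IsOpen Ω)
    (p : EuclideanSpace ℝ (Fin N) → ℝ) (L : NNReal) (hpLip : LipschitzOnWith L p Ω)
    (pmin pmax : ℝ) (hpmin : 1 < pmin) (hbd : ∀ x ∈ Ω, pmin ≤ p x ∧ p x ≤ pmax)
    (u : EuclideanSpace ℝ (Fin N) → ℝ) (hu : ContDiffOn ℝ 2 u Ω)
    (c₁ c₂ : ℝ) (hc₁ : 0 < c₁)
    (hgb : ∀ x ∈ Ω, c₁ ≤ ‖gradient u x‖ ∧ ‖gradient u x‖ ≤ c₂)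
    (hsol : ∀ η : EuclideanSpace ℝ (Fin N) → ℝ, ContDiff ℝ (⊤ : ℕ∞) η →
      HasCompactSupport η → tsupport η ⊆ Ω →
      ∫ x in Ω, ‖gradient u x‖ ^ (p x - 2) * ⟪gradient u x, gradient η x⟫ = 0) :
    ∀ ψ : EuclideanSpace ℝ (Fin N) → ℝ, ContDiff ℝ (⊤ : ℕ∞) ψ →
      HasCompactSupport ψ → tsupport ψ ⊆ Ω → (∀ x, 0 ≤ ψ x) →
      (∫ x in Ω,
          ⟪(‖gradient u x‖ ^ (p x - 2) * Real.log ‖gradient u x‖ *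
              ⟪gradient u x, gradient p x⟫) • gradient u x, gradient ψ x⟫)
        + (∫ x in Ω,
            ⟪(‖gradient u x‖ ^ (p x - 1) * Real.log ‖gradient u x‖) • gradient p x,
              gradient (fun z => ‖gradient u z‖) x⟫ * ψ x)
      ≤ -∫ x in Ω, ∑ i : Fin N, ∑ j : Fin N,
          (‖gradient u x‖ ^ (p x - 1) *
              ((if i = j then (1 : ℝ) else 0) +
                ((p x - 2) / ‖gradient u x‖ ^ 2) *
                  ⟪gradient u x, EuclideanSpace.single i (1 : ℝ)⟫ *
                  ⟪gradient u x, EuclideanSpace.single j (1 : ℝ)⟫))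
            * ⟪gradient (fun z => ‖gradient u z‖) x, EuclideanSpace.single j (1 : ℝ)⟫
            * ⟪gradient ψ x, EuclideanSpace.single i (1 : ℝ)⟫ := by
  intro ψ hψ hψc hψΩ hψ0
  obtain ⟨q, hq, hpq⟩ := hpLip.extend_real
  obtain ⟨χ, hχ, hχc, hχΩ, hχ1⟩ := exists_cutoff hψc.isCompact hΩ hψΩ
  have hg : ContDiffOn ℝ 1 (gradient u) Ω := contDiffOn_gradient hΩ hu (by norm_num)
  have hg0 : ∀ x ∈ Ω, gradient u x ≠ 0 := fun x hx =>
    norm_pos_iff.mp (hc₁.trans_le (hgb x hx).1)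
  have hgd : ∀ x ∈ Ω, DifferentiableAt ℝ (gradient u) x := fun x hx =>
    (hg.contDiffAt (hΩ.mem_nhds hx)).differentiableAt one_ne_zero
  have hvC : ContDiffOn ℝ 1 (fun z => ‖gradient u z‖) Ω := hg.norm ℝ hg0
  have hψ1 : ContDiff ℝ 1 ψ := hψ.of_le (by exact_mod_cast le_top)
  have hψd : Differentiable ℝ ψ := hψ1.differentiable one_ne_zero
  have hψgc : ∀ i, Continuous fun x => gradient ψ x i := fun i => by
    simp only [gradient_coord]
    exact (hψ1.continuous_fderiv one_ne_zero).clm_apply continuous_const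
  have hψgs : ∀ i, tsupport (fun x => gradient ψ x i) ⊆ tsupport ψ := fun i => by
    simp only [gradient_coord]
    exact tsupport_fderiv_apply_subset ℝ _
  have hψgcs : ∀ i, HasCompactSupport fun x => gradient ψ x i := fun i =>
    hψc.of_isClosed_subset (isClosed_tsupport _) (hψgs i)
  -- `p` and its global Lipschitz extension `q` agree near every point of the open set `Ω`
  have hgp : ∀ x ∈ Ω, gradient p x = gradient q x := fun x hx =>
    Filter.EventuallyEq.gradient_eq (hpq.eventuallyEq_of_mem (hΩ.mem_nhds hx))
  let V : Set (EuclideanSpace ℝ (Fin N)) := interior {x | χ x = 1}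
  have hψV : tsupport ψ ⊆ V := subset_interior_iff_mem_nhdsSet.mpr hχ1
  have hVχ : ∀ x ∈ V, ∀ᶠ y in nhds x, χ y = 1 := fun x hx => mem_interior_iff_mem_nhds.mp hx
  have hVΩ : V ⊆ Ω := fun x hx => hχΩ (subset_tsupport _ (by
    have : χ x = 1 := (hVχ x hx).self_of_nhds
    simp [this]))
  -- the localized flux and the test functions
  let G : Fin N → EuclideanSpace ℝ (Fin N) → ℝ :=
    fun i x => ‖gradient u x‖ ^ (q x - 2) * gradient u x i * χ x
  let ζ : Fin N → EuclideanSpace ℝ (Fin N) → ℝ := fun k x => gradient u x k * ψ x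
  choose C hC using fun i => exists_lipschitz_flux hΩ hg hg0 hq hχ hχc hχΩ i
  have hζ1 : ∀ k, ContDiff ℝ 1 (ζ k) := fun k =>
    contDiff_mul_of_tsupport_subset hΩ (contDiffOn_euclidean.mp hg k) hψ1 hψΩ
  have hζs : ∀ k, tsupport (ζ k) ⊆ tsupport ψ := fun k => tsupport_mul_subset_right
  have hζc : ∀ k, HasCompactSupport (ζ k) := fun k => hψc.mul_left
  choose D hD using fun k =>
    ContDiff.lipschitzWith_of_hasCompactSupport (hζc k) (hζ1 k) one_ne_zero
  have hweak : ∀ η : EuclideanSpace ℝ (Fin N) → ℝ, ContDiff ℝ (⊤ : ℕ∞) η → HasCompactSupport η →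
      tsupport η ⊆ V → ∫ x, ∑ i, G i x * lineDeriv ℝ η x (EuclideanSpace.single i 1) = 0 := by
    intro η hη hηc hηV
    rw [← hsol η hη hηc (hηV.trans hVΩ), ← setIntegral_eq_integral_of_forall_compl_eq_zero (s := Ω)]
    · refine setIntegral_congr_fun hΩ.measurableSet fun x hx => ?_
      by_cases hxη : x ∈ tsupport η
      · have hχx : χ x = 1 := (hVχ x (hηV hxη)).self_of_nhds
        simp only [G, inner_coord, Finset.mul_sum, hχx, mul_one, gradient_coord η, hpq hx,
          (hη.differentiable (by simp)).differentiableAt.lineDeriv_eq_fderiv, mul_assoc]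
      · have h0 : fderiv ℝ η x = 0 := image_eq_zero_of_notMem_tsupport
          fun h => hxη (tsupport_fderiv_subset ℝ h)
        simp [gradient, h0, lineDeriv_zero_of_notMem_tsupport hxη]
    · intro x hx
      simp [lineDeriv_zero_of_notMem_tsupport fun h => hx (hVΩ (hηV h))]
  obtain ⟨hRint, hR⟩ := integral_lineDeriv_pairing_eq_zero (μ := volume)
    (e := fun i => EuclideanSpace.single i (1 : ℝ)) hC (fun i => hχc.mul_left) hD hζc
    isOpen_interior (fun k => (hζs k).trans hψV) hweak
  have hRΩ := setIntegral_eq_integral_of_forall_compl_eq_zero (μ := volume) (s := Ω)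
    (f := fun x => ∑ k, ∑ i, lineDeriv ℝ (G i) x (EuclideanSpace.single k 1) *
      lineDeriv ℝ (ζ k) x (EuclideanSpace.single i 1)) (fun x hx => by
        simp [lineDeriv_zero_of_notMem_tsupport fun h => hx (hψΩ (hζs _ h))])
  have hgi : ∀ i, ContinuousOn (fun x => gradient u x i) Ω := fun i =>
    (contDiffOn_euclidean.mp hg i).continuousOn
  have hwi : ∀ i, ContinuousOn (fun x => gradient (fun z => ‖gradient u z‖) x i) Ω := fun i =>
    (contDiffOn_euclidean.mp (contDiffOn_gradient hΩ hvC (m := 0) (by norm_num)) i).continuousOn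
  have hpow : ∀ c : ℝ, ContinuousOn (fun x => ‖gradient u x‖ ^ (p x - c)) Ω := fun c =>
    hvC.continuousOn.rpow (hpLip.continuousOn.sub continuousOn_const)
      fun x hx => Or.inl (norm_ne_zero_iff.mpr (hg0 x hx))
  have hlog : ContinuousOn (fun x => Real.log ‖gradient u x‖) Ω :=
    hvC.continuousOn.log fun x hx => norm_ne_zero_iff.mpr (hg0 x hx)
  have hPb : ∀ i, MemLp (fun x => gradient q x i) ⊤ volume := fun i => by
    simp only [gradient_coord]
    refine memLp_top_of_bound (measurable_fderiv_apply_const ℝ q _).aestronglyMeasurable L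
      (.of_forall fun x => ?_)
    refine (ContinuousLinearMap.le_opNorm _ _).trans ?_
    simpa using norm_fderiv_le_of_lipschitz ℝ hq
  have h1b : MemLp (fun _ : EuclideanSpace ℝ (Fin N) => (1 : ℝ)) ⊤ volume := memLp_top_const 1
  -- each term is a continuous function of compact support times a bounded component of `∇q`
  have hI1 : IntegrableOn (fun x => ⟪(‖gradient u x‖ ^ (p x - 2) * Real.log ‖gradient u x‖ *
              ⟪gradient u x, gradient p x⟫) • gradient u x, gradient ψ x⟫) Ω := by
    have : Integrable (fun x => ∑ i, ∑ j, (‖gradient u x‖ ^ (p x - 2) * Real.log ‖gradient u x‖ *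
        gradient u x i * gradient u x j) * gradient ψ x j * gradient q x i) :=
      integrable_finsetSum _ fun i _ => integrable_finsetSum _ fun j _ =>
        integrable_mul_of_tsupport_subset hΩ ((((hpow 2).mul hlog).mul (hgi i)).mul (hgi j))
          (hψgc j) (hψgcs j) ((hψgs j).trans hψΩ) (hPb i)
    refine this.integrableOn.congr_fun (fun x hx => ?_) hΩ.measurableSet
    simp only [real_inner_smul_left, inner_coord, hgp x hx]
    simp only [Finset.mul_sum, Finset.sum_mul]
    rw [Finset.sum_comm]
    refine Finset.sum_congr rfl fun i _ => Finset.sum_congr rfl fun j _ => by ring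
  have hI2 : IntegrableOn (fun x =>
      ⟪(‖gradient u x‖ ^ (p x - 1) * Real.log ‖gradient u x‖) • gradient p x,
              gradient (fun z => ‖gradient u z‖) x⟫ * ψ x) Ω := by
    have : Integrable (fun x => ∑ i, (‖gradient u x‖ ^ (p x - 1) * Real.log ‖gradient u x‖ *
        gradient (fun z => ‖gradient u z‖) x i) * ψ x * gradient q x i) :=
      integrable_finsetSum _ fun i _ =>
        integrable_mul_of_tsupport_subset hΩ (((hpow 1).mul hlog).mul (hwi i))
          hψ.continuous hψc hψΩ (hPb i)
    refine this.integrableOn.congr_fun (fun x hx => ?_) hΩ.measurableSet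
    simp only [real_inner_smul_left, inner_coord, hgp x hx]
    simp only [Finset.mul_sum, Finset.sum_mul]
    refine Finset.sum_congr rfl fun i _ => by ring
  have hI3 : IntegrableOn (fun x => ∑ i : Fin N, ∑ j : Fin N,
          (‖gradient u x‖ ^ (p x - 1) *
              ((if i = j then (1 : ℝ) else 0) +
                ((p x - 2) / ‖gradient u x‖ ^ 2) *
                  ⟪gradient u x, EuclideanSpace.single i (1 : ℝ)⟫ *
                  ⟪gradient u x, EuclideanSpace.single j (1 : ℝ)⟫))
            * ⟪gradient (fun z => ‖gradient u z‖) x, EuclideanSpace.single j (1 : ℝ)⟫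
            * ⟪gradient ψ x, EuclideanSpace.single i (1 : ℝ)⟫) Ω := by
    have : Integrable (fun x => ∑ i : Fin N, ∑ j : Fin N, (‖gradient u x‖ ^ (p x - 1) *
              ((if i = j then (1 : ℝ) else 0) + ((p x - 2) / ‖gradient u x‖ ^ 2) *
                  gradient u x i * gradient u x j) * gradient (fun z => ‖gradient u z‖) x j)
            * gradient ψ x i * (1 : ℝ)) := by
      refine integrable_finsetSum _ fun i _ => integrable_finsetSum _ fun j _ =>
        integrable_mul_of_tsupport_subset hΩ ?_ (hψgc i) (hψgcs i) ((hψgs i).trans hψΩ) h1b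
      refine ((hpow 1).mul (continuousOn_const.add ((ContinuousOn.mul ?_ (hgi i)).mul
        (hgi j)))).mul (hwi j)
      exact (hpLip.continuousOn.sub continuousOn_const).div (hvC.continuousOn.pow 2)
        fun x hx => pow_ne_zero _ (norm_ne_zero_iff.mpr (hg0 x hx))
    refine this.integrableOn.congr_fun (fun x hx => ?_) hΩ.measurableSet
    simp only [inner_single_one, mul_one]
  rw [le_neg_iff_add_nonpos_right, ← integral_add hI1 hI2]
  refine (integral_add (hI1.add hI2) hI3).symm.trans_le (le_of_le_of_eq ?_ (hRΩ.trans hR))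
  refine setIntegral_mono_on_ae ((hI1.add hI2).add hI3) hRint.integrableOn hΩ.measurableSet ?_
  filter_upwards [hq.ae_differentiableAt (μ := volume)] with x hqx hx
  by_cases hxψ : x ∈ tsupport ψ
  · have hpos : 0 < ‖gradient u x‖ := norm_pos_iff.mpr (hg0 x hx)
    have hGd : ∀ i k, lineDeriv ℝ (G i) x (EuclideanSpace.single k 1) = _ := fun i k =>
      lineDeriv_flux (hgd x hx) (hg0 x hx) hqx (hVχ x (hψV hxψ)) i k
    have hζd : ∀ k i, lineDeriv ℝ (ζ k) x (EuclideanSpace.single i 1) =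
        fderiv ℝ (gradient u) x (EuclideanSpace.single i 1) k * ψ x
          + gradient u x k * gradient ψ x i := by
      intro k i
      have h1 := (hasFDerivAt_coord (hgd x hx) k).fun_mul (hψd x).hasFDerivAt
      rw [h1.differentiableAt.lineDeriv_eq_fderiv, h1.fderiv, gradient_coord ψ]
      simp
      ring
    have key := sum_inequality (fun i => gradient u x i)
      (fun i => gradient (fun z => ‖gradient u z‖) x i) (fun i => gradient q x i)
      (fun i => gradient ψ x i)
      (fun l k => fderiv ℝ (gradient u) x (EuclideanSpace.single k 1) l)
      (fun i j => fderiv_gradient_symm (hu.contDiffAt (hΩ.mem_nhds hx)) (hgd x hx) j i)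
      hpos (Real.rpow_pos_of_pos hpos (q x - 2)) (q := q x) (ℓ := Real.log ‖gradient u x‖)
      (ψ := ψ x) (by rw [← hpq hx]; exact hpmin.trans_le (hbd x hx).1) (hψ0 x)
      (EuclideanSpace.real_norm_sq_eq _)
      (norm_mul_gradient_norm (hgd x hx) (hg0 x hx))
    have hpw : ‖gradient u x‖ ^ (q x - 1) = ‖gradient u x‖ ^ (q x - 2) * ‖gradient u x‖ := by
      rw [← Real.rpow_add_one hpos.ne']; congr 1; ring
    simp only [hGd, hζd]
    refine le_trans (le_of_eq ?_) key
    simp only [Pi.add_apply, real_inner_smul_left, inner_single_one, hgp x hx,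
      hpq hx, hpw]
    simp only [inner_coord]
  · have h0 : gradient ψ x = 0 := by
      ext i
      exact image_eq_zero_of_notMem_tsupport (f := fun y => gradient ψ y i)
        fun h => hxψ (hψgs i h)
    have h1 : ψ x = 0 := image_eq_zero_of_notMem_tsupport hxψ
    have h2 : ∀ k v, lineDeriv ℝ (ζ k) x v = 0 := fun k v =>
      lineDeriv_zero_of_notMem_tsupport (fun h => hxψ (hζs k h)) v
    simp only [Pi.add_apply, h0, h1, h2, inner_zero_right, inner_zero_left, mul_zero,
      Finset.sum_const_zero, add_zero, le_refl]
end

section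
/- Let 1 < p₀ < ∞, λ₀ > 0, λ₁ > 0, let ν₀ ∈ ℝ^N be a unit vector and R > 0, and let u : B_R ⊂ ℝ^N → ℝ be given by u(x) = λ₁ ⟨x, ν₀⟩⁻ = λ₁ max(−⟨x, ν₀⟩, 0). Suppose u is a local minimizer in B_R of the functional J₀(v) = ∫_{B_R} |∇v|^{p₀}/p₀ + λ₀ χ_{{v>0}} dx among Lipschitz compact perturbations, i.e. J₀(u) ≤ J₀(v) for every locally Lipschitz v : B_R → ℝ coinciding with u outside a compact subset of B_R. Then λ₁ = ( (p₀/(p₀−1)) λ₀ )^{1/p₀}. -/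
/-!
The proof is the first variation of the functional under inner variations.
Fix `ρ = R / 2` and the cut-off `φ(x) = ((ρ² - |x|²)₊)²`, and compare `u` with
`v = u ∘ g`, where `g(x) = x + ε φ(x) ν₀` (`shift`). For small `|ε|` the map `g` is a bijection of
`ℝ^N` preserving `B_R`, with Jacobian `1 + ε ∂_ν φ` (a transvection), so the energy of `u` pulls
back to the set `E_ε = {⟨g(x), ν₀⟩ < 0} = {v > 0}` (`volume_halfBall`). On `E_ε` one has
`|∇v| = λ₁ |ν₀ + ε ∇φ|`, whence
`J₀(v) - J₀(u) ≤ ε a ∫_{E_ε} ∂_ν φ + O(ε²)` with `a = λ₁^p (1 - 1/p) - λ₀` (`norm_rpow_le`).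

With this cut-off `∂_ν φ = -4 (ρ² - |x|²)₊ ⟨x, ν₀⟩` vanishes on the hyperplane, so `E_ε` may be
replaced by `{⟨x, ν₀⟩ < 0}` up to another `O(ε²)` (`shift_indicator_le`), and the resulting
constant `c = ∫_{⟨x, ν₀⟩ < 0} ∂_ν φ` is positive because its integrand is (`integral_pos`).
Minimality gives `0 ≤ ε a c + O(ε²)` for small `ε` of both signs; hence `a = 0`, which is the claim.
-/


open scoped RealInnerProductSpace
open MeasureTheory Metric

/-- `v` is locally Lipschitz on `Ω`. -/
def LocLipOn {N : ℕ} (Ω : Set (EuclideanSpace ℝ (Fin N)))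
    (v : EuclideanSpace ℝ (Fin N) → ℝ) : Prop :=
  ∀ x ∈ Ω, ∃ (K : NNReal) (t : Set (EuclideanSpace ℝ (Fin N))),
    t ∈ nhds x ∧ LipschitzOnWith K v t

/-! ### The cut-off and the inner variation -/

/-- The `C¹` cut-off `x ↦ ((ρ² - |x|²)₊)²`, supported in the closed ball of radius `ρ`. -/
noncomputable def cutoff {N : ℕ} (ρ : ℝ) (x : EuclideanSpace ℝ (Fin N)) : ℝ :=
  max (ρ ^ 2 - ‖x‖ ^ 2) 0 ^ 2

/-- The gradient `-4 (ρ² - |x|²)₊ x` of `cutoff ρ`. -/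
noncomputable def cutoffGrad {N : ℕ} (ρ : ℝ) (x : EuclideanSpace ℝ (Fin N)) :
    EuclideanSpace ℝ (Fin N) :=
  (-4 * max (ρ ^ 2 - ‖x‖ ^ 2) 0) • x

/-- The inner variation `x ↦ x + ε φ(x) ν` in direction `ν`, with `φ = cutoff ρ`. -/
noncomputable def shift {N : ℕ} (ν : EuclideanSpace ℝ (Fin N)) (ρ ε : ℝ)
    (x : EuclideanSpace ℝ (Fin N)) : EuclideanSpace ℝ (Fin N) :=
  x + (ε * cutoff ρ x) • ν

section
variable {N : ℕ}

lemma hasDerivAt_posPart_sq (s : ℝ) :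
    HasDerivAt (fun y : ℝ => max y 0 ^ 2) (2 * max s 0) s := by
  have h : HasFDerivAt (fun y : ℝ => max y 0 ^ 2 - 2 * max s 0 * y) (0 : ℝ →L[ℝ] ℝ) s := by
    have h1 : HasFDerivAt (fun y : ℝ => max y 0 ^ 2 - 2 * max s 0 * y
        - (max s 0 ^ 2 - 2 * max s 0 * s)) (0 : ℝ →L[ℝ] ℝ) s := by
      refine Asymptotics.IsBigO.hasFDerivAt (n := 2) ?_ one_lt_two
      refine Asymptotics.IsBigO.of_bound 1 (Filter.Eventually.of_forall fun y => ?_)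
      simp only [Real.norm_eq_abs, one_mul, sq_abs, abs_pow]
      rw [abs_le]
      rcases max_cases y 0 with ⟨h1, h2⟩ | ⟨h1, h2⟩ <;>
        rcases max_cases s 0 with ⟨h3, h4⟩ | ⟨h3, h4⟩ <;> rw [h1, h3] <;>
        constructor <;> nlinarith
    simpa using h1.add_const (max s 0 ^ 2 - 2 * max s 0 * s)
  have h2 := h.hasDerivAt.add ((hasDerivAt_id s).const_mul (2 * max s 0))
  simpa [Pi.add_def] using h2

lemma hasGradientAt_cutoff (ρ : ℝ) (x : EuclideanSpace ℝ (Fin N)) :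
    HasGradientAt (cutoff ρ) (cutoffGrad ρ x) x := by
  rw [hasGradientAt_iff_hasFDerivAt]
  have h1 : HasFDerivAt (fun y : EuclideanSpace ℝ (Fin N) => ρ ^ 2 - ‖y‖ ^ 2)
      (-((2 : ℝ) • innerSL ℝ x)) x := by
    have := (hasStrictFDerivAt_norm_sq x).hasFDerivAt.const_sub (ρ ^ 2)
    simpa [ofNat_smul_eq_nsmul] using this
  have h2 := (hasDerivAt_posPart_sq (ρ ^ 2 - ‖x‖ ^ 2)).comp_hasFDerivAt x h1
  have e : InnerProductSpace.toDual ℝ _ (cutoffGrad ρ x) =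
      (2 * max (ρ ^ 2 - ‖x‖ ^ 2) 0) • -((2 : ℝ) • innerSL ℝ x) := by
    ext y
    simp [cutoffGrad]
    ring
  rw [e]
  exact h2

lemma cutoff_nonneg (ρ : ℝ) (x : EuclideanSpace ℝ (Fin N)) : 0 ≤ cutoff ρ x := sq_nonneg _

lemma posPart_le (ρ : ℝ) (x : EuclideanSpace ℝ (Fin N)) :
    max (ρ ^ 2 - ‖x‖ ^ 2) 0 ≤ ρ ^ 2 :=
  max_le (by nlinarith [sq_nonneg ‖x‖]) (sq_nonneg _)

lemma cutoff_le (ρ : ℝ) (x : EuclideanSpace ℝ (Fin N)) : cutoff ρ x ≤ ρ ^ 4 := by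
  have := pow_le_pow_left₀ (le_max_right _ _) (posPart_le ρ x) 2
  rw [cutoff]; nlinarith

lemma cutoff_eq_zero {ρ : ℝ} (hρ : 0 < ρ) {x : EuclideanSpace ℝ (Fin N)} (hx : ρ ≤ ‖x‖) :
    cutoff ρ x = 0 := by
  have : max (ρ ^ 2 - ‖x‖ ^ 2) 0 = 0 := max_eq_right (by nlinarith)
  simp [cutoff, this]

lemma norm_cutoffGrad_le {ρ : ℝ} (hρ : 0 < ρ) (x : EuclideanSpace ℝ (Fin N)) :
    ‖cutoffGrad ρ x‖ ≤ 4 * ρ ^ 3 := by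
  rw [cutoffGrad, norm_smul, norm_mul, Real.norm_eq_abs, Real.norm_eq_abs,
    abs_of_nonneg (le_max_right (ρ ^ 2 - ‖x‖ ^ 2) 0)]
  rcases le_total ρ ‖x‖ with h | h
  · have : max (ρ ^ 2 - ‖x‖ ^ 2) 0 = 0 := max_eq_right (by nlinarith)
    rw [this]; simp; positivity
  · have h1 := mul_le_mul (posPart_le ρ x) h (norm_nonneg x) (sq_nonneg ρ)
    norm_num
    nlinarith

lemma continuous_cutoffGrad (ρ : ℝ) :
    Continuous (cutoffGrad ρ : EuclideanSpace ℝ (Fin N) → _) := by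
  unfold cutoffGrad; fun_prop

lemma continuous_cutoff (ρ : ℝ) :
    Continuous (cutoff ρ : EuclideanSpace ℝ (Fin N) → ℝ) := by
  unfold cutoff; fun_prop

lemma continuous_shift (ν : EuclideanSpace ℝ (Fin N)) (ρ ε : ℝ) :
    Continuous (shift ν ρ ε) := by
  have := continuous_cutoff (N := N) ρ
  unfold shift; fun_prop

lemma cutoff_sub_le {ρ : ℝ} (hρ : 0 < ρ) (x y : EuclideanSpace ℝ (Fin N)) :
    |cutoff ρ x - cutoff ρ y| ≤ 4 * ρ ^ 3 * ‖x - y‖ := by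
  have := convex_univ.norm_image_sub_le_of_norm_hasFDerivWithin_le
    (f := (cutoff ρ : EuclideanSpace ℝ (Fin N) → ℝ)) (C := 4 * ρ ^ 3) (x := y) (y := x)
    (fun z _ => (hasGradientAt_cutoff ρ z).hasFDerivAt.hasFDerivWithinAt)
    (fun z _ => by simpa using norm_cutoffGrad_le hρ z) trivial trivial
  simpa using this

/-! ### The map `shift` as a change of variables -/

lemma inner_shift {ν : EuclideanSpace ℝ (Fin N)} (hν : ‖ν‖ = 1) (ρ ε : ℝ)
    (x : EuclideanSpace ℝ (Fin N)) :
    ⟪shift ν ρ ε x, ν⟫ = ⟪x, ν⟫ + ε * cutoff ρ x := by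
  simp [shift, inner_add_left, inner_smul_left, hν]

lemma hasFDerivAt_shift (ν : EuclideanSpace ℝ (Fin N)) (ρ ε : ℝ)
    (x : EuclideanSpace ℝ (Fin N)) :
    HasFDerivAt (shift ν ρ ε) (ContinuousLinearMap.id ℝ _ +
      (ε • innerSL ℝ (cutoffGrad ρ x)).smulRight ν) x := by
  have h := ((hasGradientAt_cutoff ρ x).hasFDerivAt.const_mul ε).smul_const ν
  exact (hasFDerivAt_id x).add h

lemma det_shift (ν : EuclideanSpace ℝ (Fin N)) (ρ ε : ℝ)
    (x : EuclideanSpace ℝ (Fin N)) :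
    (ContinuousLinearMap.id ℝ (EuclideanSpace ℝ (Fin N)) +
      (ε • innerSL ℝ (cutoffGrad ρ x)).smulRight ν).det = 1 + ε * ⟪cutoffGrad ρ x, ν⟫ := by
  have h := LinearMap.transvection.det (R := ℝ)
    ((ε • innerSL ℝ (cutoffGrad ρ x) : EuclideanSpace ℝ (Fin N) →L[ℝ] ℝ) :
      EuclideanSpace ℝ (Fin N) →ₗ[ℝ] ℝ) ν
  have e : ((ContinuousLinearMap.id ℝ (EuclideanSpace ℝ (Fin N)) +
      (ε • innerSL ℝ (cutoffGrad ρ x)).smulRight ν : EuclideanSpace ℝ (Fin N) →L[ℝ] _) :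
        EuclideanSpace ℝ (Fin N) →ₗ[ℝ] EuclideanSpace ℝ (Fin N)) =
      LinearMap.transvection ((ε • innerSL ℝ (cutoffGrad ρ x) :
        EuclideanSpace ℝ (Fin N) →L[ℝ] ℝ) : EuclideanSpace ℝ (Fin N) →ₗ[ℝ] ℝ) ν := by
    ext y
    simp [LinearMap.transvection.apply]
  rw [ContinuousLinearMap.det, e, h]
  simp

lemma shift_bijective {ν : EuclideanSpace ℝ (Fin N)} (hν : ‖ν‖ = 1) {ρ ε : ℝ} (hρ : 0 < ρ)
    (hε : |ε| * (4 * ρ ^ 3) < 1) : Function.Bijective (shift ν ρ ε) := by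
  have hc : 0 ≤ |ε| * (4 * ρ ^ 3) := by positivity
  have happ : ApproximatesLinearOn (shift ν ρ ε)
      ((ContinuousLinearEquiv.refl ℝ (EuclideanSpace ℝ (Fin N)) :
        EuclideanSpace ℝ (Fin N) ≃L[ℝ] EuclideanSpace ℝ (Fin N)) :
        EuclideanSpace ℝ (Fin N) →L[ℝ] EuclideanSpace ℝ (Fin N)) Set.univ
      (NNReal.mk (|ε| * (4 * ρ ^ 3)) hc) := by
    refine ApproximatesLinearOn.approximatesLinearOn_iff_lipschitzOnWith.2
      (LipschitzOnWith.of_dist_le_mul fun x _ y _ => ?_)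
    have e : shift ν ρ ε x - x - (shift ν ρ ε y - y) = (ε * (cutoff ρ x - cutoff ρ y)) • ν := by
      simp only [shift]; module
    have := mul_le_mul_of_nonneg_left (cutoff_sub_le hρ x y) (abs_nonneg ε)
    simp only [dist_eq_norm, Pi.sub_apply, ContinuousLinearEquiv.coe_coe,
      ContinuousLinearEquiv.coe_refl', id]
    rw [e, norm_smul, hν, Real.norm_eq_abs, abs_mul, NNReal.coe_mk]
    linarith
  have hN : Subsingleton (EuclideanSpace ℝ (Fin N)) ∨
      NNReal.mk (|ε| * (4 * ρ ^ 3)) hc <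
      ‖((ContinuousLinearEquiv.refl ℝ (EuclideanSpace ℝ (Fin N))).symm :
        EuclideanSpace ℝ (Fin N) →L[ℝ] EuclideanSpace ℝ (Fin N))‖₊⁻¹ := by
    right
    have : Nontrivial (EuclideanSpace ℝ (Fin N)) :=
      ⟨ν, 0, fun h => by simp [h] at hν⟩
    have e : ‖((ContinuousLinearEquiv.refl ℝ (EuclideanSpace ℝ (Fin N))).symm :
        EuclideanSpace ℝ (Fin N) →L[ℝ] EuclideanSpace ℝ (Fin N))‖₊ = 1 := by
      apply NNReal.eq
      exact ContinuousLinearMap.norm_id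
    rw [e, inv_one]
    exact hε
  exact ⟨Set.injOn_univ.1 (happ.injOn hN), happ.surjective hN⟩

lemma shift_eq_self {ν : EuclideanSpace ℝ (Fin N)} {ρ ε : ℝ} (hρ : 0 < ρ)
    {x : EuclideanSpace ℝ (Fin N)} (hx : ρ ≤ ‖x‖) : shift ν ρ ε x = x := by
  simp [shift, cutoff_eq_zero hρ hx]

lemma shift_image {ν : EuclideanSpace ℝ (Fin N)} (hν : ‖ν‖ = 1) {ρ ε R : ℝ} (hρ : 0 < ρ)
    (hR : ρ < R) (hε : |ε| * (4 * ρ ^ 3) < 1) :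
    shift ν ρ ε '' (ball 0 R ∩ {x | ⟪shift ν ρ ε x, ν⟫ < 0}) =
      ball 0 R ∩ {x | ⟪x, ν⟫ < 0} := by
  obtain ⟨hinj, hsurj⟩ := shift_bijective hν hρ hε
  ext y
  simp only [Set.mem_image, Set.mem_inter_iff, mem_ball_zero_iff, Set.mem_ofPred_eq]
  constructor
  · rintro ⟨x, ⟨hx, hx'⟩, rfl⟩
    refine ⟨?_, hx'⟩
    by_contra! h
    -- outside the ball the map is the identity, so `x` would be a fixed point
    have := hinj (shift_eq_self (ν := ν) (ε := ε) hρ (hR.le.trans h))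
    rw [this] at h
    linarith
  · rintro ⟨hy, hy'⟩
    obtain ⟨x, rfl⟩ := hsurj y
    refine ⟨x, ⟨?_, hy'⟩, rfl⟩
    by_contra! h
    rw [shift_eq_self hρ (hR.le.trans h)] at hy
    linarith

/-- Change of variables along `shift`: the half ball expressed as an integral over its
preimage, with Jacobian `1 + ε ∂_ν φ`. -/
lemma volume_halfBall {ν : EuclideanSpace ℝ (Fin N)} (hν : ‖ν‖ = 1) {ρ ε R : ℝ} (hρ : 0 < ρ)
    (hR : ρ < R) (hε : |ε| * (4 * ρ ^ 3) < 1) (A : ℝ) :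
    ∫ x in ball (0 : EuclideanSpace ℝ (Fin N)) R, (if ⟪x, ν⟫ < 0 then A else 0) =
    ∫ x in ball (0 : EuclideanSpace ℝ (Fin N)) R,
      (if ⟪shift ν ρ ε x, ν⟫ < 0 then (1 + ε * ⟪cutoffGrad ρ x, ν⟫) * A else 0) := by
  have hm1 : MeasurableSet {x : EuclideanSpace ℝ (Fin N) | ⟪x, ν⟫ < 0} :=
    (isOpen_lt (by fun_prop) continuous_const).measurableSet
  have hm2 : MeasurableSet {x : EuclideanSpace ℝ (Fin N) | ⟪shift ν ρ ε x, ν⟫ < 0} := by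
    have := continuous_shift ν ρ ε
    exact (isOpen_lt (by fun_prop) continuous_const).measurableSet
  have e1 : ∀ f : EuclideanSpace ℝ (Fin N) → ℝ, (fun x => if ⟪x, ν⟫ < 0 then f x else 0) =
      Set.indicator {x | ⟪x, ν⟫ < 0} f := fun f => by
    ext x; simp [Set.indicator_apply]
  have e2 : ∀ f : EuclideanSpace ℝ (Fin N) → ℝ,
      (fun x => if ⟪shift ν ρ ε x, ν⟫ < 0 then f x else 0) =
      Set.indicator {x | ⟪shift ν ρ ε x, ν⟫ < 0} f := fun f => by
    ext x; simp [Set.indicator_apply]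
  rw [e1 (fun _ => A), e2, setIntegral_indicator hm1, setIntegral_indicator hm2,
    ← shift_image hν hρ hR hε,
    integral_image_eq_integral_abs_det_fderiv_smul volume (measurableSet_ball.inter hm2)
      (fun x _ => (hasFDerivAt_shift ν ρ ε x).hasFDerivWithinAt)
      ((shift_bijective hν hρ hε).1.injOn)]
  refine integral_congr_ae (Filter.Eventually.of_forall fun x => ?_)
  have hb : |ε * ⟪cutoffGrad ρ x, ν⟫| < 1 := by
    rw [abs_mul]
    refine lt_of_le_of_lt (mul_le_mul_of_nonneg_left ?_ (abs_nonneg ε)) hε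
    have := abs_real_inner_le_norm (cutoffGrad ρ x) ν
    rw [hν, mul_one] at this
    exact this.trans (norm_cutoffGrad_le hρ x)
  simp only [det_shift, smul_eq_mul]
  rw [abs_of_pos (by linarith [(abs_lt.1 hb).1])]

/-! ### Energy of the competitor -/

/-- The energy density of the competitor `λ₁ ⟨shift x, ν⟩⁻`. At points where the competitor
vanishes it attains its minimum, so its gradient, or its junk value, is zero. -/
lemma density_eq {ν : EuclideanSpace ℝ (Fin N)} (hν : ‖ν‖ = 1) (ρ ε : ℝ) {p lam₀ lam₁ : ℝ}
    (hp : 1 < p) (hlam₁ : 0 < lam₁) (x : EuclideanSpace ℝ (Fin N)) :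
    ‖gradient (fun y => lam₁ * max (-⟪shift ν ρ ε y, ν⟫) 0) x‖ ^ p / p
      + (if 0 < lam₁ * max (-⟪shift ν ρ ε x, ν⟫) 0 then lam₀ else 0) =
    if ⟪shift ν ρ ε x, ν⟫ < 0 then
      lam₁ ^ p * ‖ν + ε • cutoffGrad ρ x‖ ^ p / p + lam₀ else 0 := by
  split_ifs with h1 h2 h2
  · have hcont : Continuous (fun y => ⟪shift ν ρ ε y, ν⟫) := by
      have := continuous_shift ν ρ ε
      fun_prop
    have hg : HasGradientAt (fun y => lam₁ * max (-⟪shift ν ρ ε y, ν⟫) 0)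
        ((-lam₁) • (ν + ε • cutoffGrad ρ x)) x := by
      rw [hasGradientAt_iff_hasFDerivAt]
      have hev : (fun y => lam₁ * max (-⟪shift ν ρ ε y, ν⟫) 0) =ᶠ[nhds x]
          fun y => (-lam₁) * (innerSL ℝ ν y + ε * cutoff ρ y) := by
        filter_upwards [hcont.continuousAt.eventually_lt continuousAt_const h2] with y hy
        rw [max_eq_left (by linarith), inner_shift hν, innerSL_apply_apply, real_inner_comm]
        ring
      refine HasFDerivAt.congr_of_eventuallyEq ?_ hev
      have := (((innerSL ℝ ν).hasFDerivAt (x := x)).add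
        ((hasGradientAt_cutoff ρ x).hasFDerivAt.const_mul ε)).const_mul (-lam₁)
      have e : InnerProductSpace.toDual ℝ _ ((-lam₁) • (ν + ε • cutoffGrad ρ x)) =
          (-lam₁) • (innerSL ℝ ν + ε • InnerProductSpace.toDual ℝ _ (cutoffGrad ρ x)) := by
        ext y
        simp
      rw [e]
      exact this
    rw [hg.gradient, norm_smul, norm_neg, Real.norm_of_nonneg hlam₁.le,
      Real.mul_rpow hlam₁.le (norm_nonneg _)]
  · rw [max_eq_right (by linarith)] at h1; simp at h1
  · exact absurd (mul_pos hlam₁ (lt_max_of_lt_left (by linarith))) h1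
  · have hmin : IsLocalMin (fun y => lam₁ * max (-⟪shift ν ρ ε y, ν⟫) 0) x := by
      refine Filter.Eventually.of_forall fun y => ?_
      simp only
      rw [max_eq_right (a := -⟪shift ν ρ ε x, ν⟫) (by linarith), mul_zero]
      positivity
    have : gradient (fun y => lam₁ * max (-⟪shift ν ρ ε y, ν⟫) 0) x = 0 := by
      rw [gradient, hmin.fderiv_eq_zero, map_zero]
    rw [this, norm_zero, Real.zero_rpow (by linarith)]
    simp

/-- Uniform first-order upper bound for `|ν + ε w|^p`. -/
lemma norm_rpow_le {ν w : EuclideanSpace ℝ (Fin N)} (hν : ‖ν‖ = 1) {p ε M : ℝ} (hp : 1 < p)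
    (hM : 0 ≤ M) (hw : ‖w‖ ≤ M) (hε1 : |ε| ≤ 1) (hε2 : p / 2 * (|ε| * (2 * M + M ^ 2)) ≤ 1) :
    ‖ν + ε • w‖ ^ p ≤ 1 + p * (ε * ⟪w, ν⟫) +
      (p / 2 * M ^ 2 + (p / 2 * (2 * M + M ^ 2)) ^ 2) * ε ^ 2 := by
  set s : ℝ := 2 * (ε * ⟪w, ν⟫) + ε ^ 2 * ‖w‖ ^ 2 with hs
  have hsq : ‖ν + ε • w‖ ^ 2 = s + 1 := by
    rw [norm_add_sq_real, hν, inner_smul_right, norm_smul, mul_pow, Real.norm_eq_abs, sq_abs,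
      real_inner_comm]
    ring
  have hw2 : ‖w‖ ^ 2 ≤ M ^ 2 := pow_le_pow_left₀ (norm_nonneg _) hw 2
  have hin : |⟪w, ν⟫| ≤ M := by
    have := abs_real_inner_le_norm w ν
    rw [hν, mul_one] at this
    exact this.trans hw
  have hε : ε ^ 2 ≤ |ε| := by
    rw [← sq_abs]; nlinarith [abs_nonneg ε]
  have hsabs : |s| ≤ |ε| * (2 * M + M ^ 2) := by
    have h1 : |2 * (ε * ⟪w, ν⟫)| ≤ 2 * (|ε| * M) := by
      rw [abs_mul, abs_mul, abs_two]
      gcongr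
    have h2 : |ε ^ 2 * ‖w‖ ^ 2| ≤ |ε| * M ^ 2 := by
      rw [abs_of_nonneg (by positivity)]
      gcongr
    calc |s| ≤ _ := abs_add_le _ _
      _ ≤ _ := add_le_add h1 h2
      _ = _ := by ring
  have hq : |p / 2 * s| ≤ p / 2 * (|ε| * (2 * M + M ^ 2)) := by
    rw [abs_mul, abs_of_pos (by linarith : 0 < p / 2)]
    gcongr
  have hpow : ‖ν + ε • w‖ ^ p = (s + 1) ^ (p / 2) := by
    rw [← hsq, ← Real.rpow_natCast, ← Real.rpow_mul (norm_nonneg _)]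
    congr 1; push_cast; ring
  have hnn : 0 ≤ s + 1 := hsq ▸ sq_nonneg _
  have hexp : (s + 1) ^ (p / 2) ≤ Real.exp (p / 2 * s) := by
    rw [mul_comm, Real.exp_mul]
    exact Real.rpow_le_rpow hnn (Real.add_one_le_exp s) (by linarith)
  have h3 := (abs_le.1 (Real.abs_exp_sub_one_sub_id_le (hq.trans hε2))).2
  have h4 : (p / 2 * s) ^ 2 ≤ (p / 2 * (2 * M + M ^ 2)) ^ 2 * ε ^ 2 := by
    rw [← sq_abs, ← sq_abs ε, ← mul_pow]
    refine pow_le_pow_left₀ (abs_nonneg _) (hq.trans_eq (by ring)) 2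
  have h5 : p / 2 * s ≤ p * (ε * ⟪w, ν⟫) + p / 2 * M ^ 2 * ε ^ 2 := by
    have := mul_le_mul_of_nonneg_left hw2 (mul_nonneg (by linarith : 0 ≤ p / 2) (sq_nonneg ε))
    rw [hs]; nlinarith
  rw [hpow]
  nlinarith

/-! ### The first-order term -/

lemma inner_cutoffGrad (ν : EuclideanSpace ℝ (Fin N)) (ρ : ℝ) (x : EuclideanSpace ℝ (Fin N)) :
    ⟪cutoffGrad ρ x, ν⟫ = -4 * max (ρ ^ 2 - ‖x‖ ^ 2) 0 * ⟪x, ν⟫ := by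
  simp [cutoffGrad, inner_smul_left]

/-- Moving the half space changes `∂_ν φ 1_{⟨x,ν⟩<0}` only by `O(ε)`: on the symmetric
difference `|⟨x,ν⟩| ≤ |ε| φ`, and `∂_ν φ` vanishes linearly on `⟨x,ν⟩ = 0`. -/
lemma shift_indicator_le {ν : EuclideanSpace ℝ (Fin N)} (hν : ‖ν‖ = 1) (ρ ε b : ℝ)
    (x : EuclideanSpace ℝ (Fin N)) :
    (if ⟪shift ν ρ ε x, ν⟫ < 0 then b * ⟪cutoffGrad ρ x, ν⟫ else 0) ≤
      (if ⟪x, ν⟫ < 0 then b * ⟪cutoffGrad ρ x, ν⟫ else 0) + |b| * (4 * ρ ^ 6) * |ε| := by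
  have hnn : 0 ≤ |b| * (4 * ρ ^ 6) * |ε| := by positivity
  have key : |⟪x, ν⟫| ≤ |ε| * cutoff ρ x →
      |b * ⟪cutoffGrad ρ x, ν⟫| ≤ |b| * (4 * ρ ^ 6) * |ε| := by
    intro h
    have h1 : |⟪x, ν⟫| ≤ |ε| * ρ ^ 4 :=
      h.trans (mul_le_mul_of_nonneg_left (cutoff_le ρ x) (abs_nonneg _))
    rw [inner_cutoffGrad, abs_mul, abs_mul, abs_mul,
      abs_of_nonneg (le_max_right (ρ ^ 2 - ‖x‖ ^ 2) 0)]
    have h2 := mul_le_mul (posPart_le ρ x) h1 (abs_nonneg _) (sq_nonneg ρ)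
    have h3 := mul_le_mul_of_nonneg_left h2 (abs_nonneg b)
    norm_num
    nlinarith
  have hφ := cutoff_nonneg ρ x
  have h1 := mul_le_mul_of_nonneg_right (neg_abs_le ε) hφ
  have h2 := mul_le_mul_of_nonneg_right (le_abs_self ε) hφ
  rw [inner_shift hν]
  split_ifs with h h' h'
  · linarith
  · have := key (by rw [abs_le]; constructor <;> nlinarith)
    linarith [le_abs_self (b * ⟪cutoffGrad ρ x, ν⟫)]
  · have := key (by rw [abs_le]; constructor <;> nlinarith)
    linarith [neg_abs_le (b * ⟪cutoffGrad ρ x, ν⟫)]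
  · linarith

lemma integrableOn_ite {ν : EuclideanSpace ℝ (Fin N)} (ρ ε R : ℝ)
    {f : EuclideanSpace ℝ (Fin N) → ℝ} (hf : Continuous f) :
    IntegrableOn (fun x => if ⟪shift ν ρ ε x, ν⟫ < 0 then f x else 0) (ball 0 R) := by
  have hm2 : MeasurableSet {x : EuclideanSpace ℝ (Fin N) | ⟪shift ν ρ ε x, ν⟫ < 0} := by
    have := continuous_shift ν ρ ε
    exact (isOpen_lt (by fun_prop) continuous_const).measurableSet
  have e2 : (fun x => if ⟪shift ν ρ ε x, ν⟫ < 0 then f x else 0) =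
      Set.indicator {x | ⟪shift ν ρ ε x, ν⟫ < 0} f := by
    ext x; simp [Set.indicator_apply]
  rw [e2]
  have : IntegrableOn f (ball 0 R) :=
    (hf.continuousOn.integrableOn_compact (isCompact_closedBall 0 R)).mono_set
      ball_subset_closedBall
  exact this.indicator hm2

lemma shift_zero (ν : EuclideanSpace ℝ (Fin N)) (ρ : ℝ) (x : EuclideanSpace ℝ (Fin N)) :
    shift ν ρ 0 x = x := by simp [shift]

lemma integral_pos {ν : EuclideanSpace ℝ (Fin N)} (hν : ‖ν‖ = 1) {ρ R : ℝ} (hρ : 0 < ρ)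
    (hR : ρ < R) :
    0 < ∫ x in ball (0 : EuclideanSpace ℝ (Fin N)) R,
      (if ⟪x, ν⟫ < 0 then ⟪cutoffGrad ρ x, ν⟫ else 0) := by
  have hc := continuous_cutoffGrad (N := N) ρ
  have hint : IntegrableOn (fun x : EuclideanSpace ℝ (Fin N) =>
      if ⟪x, ν⟫ < 0 then ⟪cutoffGrad ρ x, ν⟫ else 0) (ball 0 R) := by
    have := integrableOn_ite (ν := ν) ρ 0 R (f := fun x => ⟪cutoffGrad ρ x, ν⟫) (by fun_prop)
    simpa only [shift_zero] using this
  rw [setIntegral_pos_iff_support_of_nonneg_ae (Filter.Eventually.of_forall fun x => ?_) hint]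
  · have hopen : IsOpen (ball (0 : EuclideanSpace ℝ (Fin N)) ρ ∩ {x | ⟪x, ν⟫ < 0}) :=
      isOpen_ball.inter (isOpen_lt (by fun_prop) continuous_const)
    refine (hopen.measure_pos volume ⟨(-(ρ / 2)) • ν, ?_, ?_⟩).trans_le (measure_mono ?_)
    · rw [mem_ball_zero_iff, norm_smul, hν, norm_neg, Real.norm_of_nonneg (by linarith)]
      linarith
    · simp [inner_smul_left, hν]; exact hρ
    · rintro x ⟨hx, hx'⟩
      refine ⟨?_, ball_subset_ball hR.le hx⟩
      rw [mem_ball_zero_iff] at hx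
      simp only [Set.mem_ofPred_eq] at hx'
      have : 0 < ρ ^ 2 - ‖x‖ ^ 2 := by nlinarith [norm_nonneg x]
      simp only [Function.mem_support, if_pos hx', inner_cutoffGrad, max_eq_left this.le]
      nlinarith [mul_pos this (neg_pos.2 hx')]
  · simp only [Pi.zero_apply]
    split_ifs with h
    · rw [inner_cutoffGrad]
      nlinarith [mul_nonneg (le_max_right (ρ ^ 2 - ‖x‖ ^ 2) 0) (neg_pos.2 h).le]
    · exact le_rfl

/-! ### Admissibility and the two-sided first-order condition -/

lemma locLip_competitor {ν : EuclideanSpace ℝ (Fin N)} (hν : ‖ν‖ = 1) {ρ : ℝ} (hρ : 0 < ρ)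
    (ε : ℝ) {lam₁ : ℝ} (hlam₁ : 0 < lam₁) (Ω : Set (EuclideanSpace ℝ (Fin N))) :
    LocLipOn Ω (fun y => lam₁ * max (-⟪shift ν ρ ε y, ν⟫) 0) := by
  intro x _
  refine ⟨NNReal.mk (lam₁ * (1 + |ε| * (4 * ρ ^ 3))) (by positivity), Set.univ, Filter.univ_mem,
    LipschitzOnWith.of_dist_le_mul fun y _ z _ => ?_⟩
  rw [Real.dist_eq, ← mul_sub, abs_mul, abs_of_pos hlam₁, NNReal.coe_mk, mul_assoc, dist_eq_norm]
  refine mul_le_mul_of_nonneg_left ((abs_max_sub_max_le_abs _ _ _).trans ?_) hlam₁.le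
  have e : -⟪shift ν ρ ε y, ν⟫ - -⟪shift ν ρ ε z, ν⟫ =
      -(⟪y - z, ν⟫ + ε * (cutoff ρ y - cutoff ρ z)) := by
    rw [inner_shift hν, inner_shift hν, inner_sub_left]; ring
  rw [e, abs_neg]
  have h1 := abs_real_inner_le_norm (y - z) ν
  rw [hν, mul_one] at h1
  have h2 := mul_le_mul_of_nonneg_left (cutoff_sub_le hρ y z) (abs_nonneg ε)
  calc _ ≤ _ := abs_add_le _ _
    _ ≤ ‖y - z‖ + |ε| * (4 * ρ ^ 3 * ‖y - z‖) := by
      rw [abs_mul]; exact add_le_add h1 h2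
    _ = _ := by ring

lemma eq_zero_of_quadratic {b C δ : ℝ} (hδ : 0 < δ)
    (h : ∀ ε : ℝ, |ε| ≤ δ → 0 ≤ ε * b + C * ε ^ 2) : b = 0 := by
  have hder : HasDerivAt (fun ε : ℝ => ε * b + C * ε ^ 2) b 0 := by
    have := ((hasDerivAt_id (0 : ℝ)).mul_const b).add (((hasDerivAt_id (0 : ℝ)).pow 2).const_mul C)
    simpa [Pi.add_def] using this
  refine IsLocalMin.hasDerivAt_eq_zero ?_ hder
  filter_upwards [Metric.closedBall_mem_nhds (0 : ℝ) hδ] with ε hε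
  simpa using h ε (by simpa using hε)

end

/-- Let `1 < p₀ < ∞`, `λ₀ > 0`, `λ₁ > 0`, `ν₀` a unit vector, `R > 0`,
and `u(x) = λ₁ ⟨x, ν₀⟩⁻`. If `u` is a local minimizer in `B_R` of
`J₀(v) = ∫_{B_R} |∇v|^{p₀}/p₀ + λ₀ χ_{v>0}` among Lipschitz compact perturbations, then
`λ₁ = ((p₀/(p₀−1)) λ₀)^{1/p₀}`. -/
theorem stmt_13 (N : ℕ) (hN : 1 ≤ N) (p₀ lam₀ lam₁ R : ℝ)
    (hp₀ : 1 < p₀) (hlam₀ : 0 < lam₀) (hlam₁ : 0 < lam₁) (hR : 0 < R)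
    (ν₀ : EuclideanSpace ℝ (Fin N)) (hν₀ : ‖ν₀‖ = 1)
    (hmin : ∀ v : EuclideanSpace ℝ (Fin N) → ℝ,
      LocLipOn (ball (0 : EuclideanSpace ℝ (Fin N)) R) v →
      (∃ K : Set (EuclideanSpace ℝ (Fin N)), IsCompact K ∧
        K ⊆ ball (0 : EuclideanSpace ℝ (Fin N)) R ∧
        ∀ x ∉ K, v x = lam₁ * max (-⟪x, ν₀⟫) 0) →
      (∫ x in ball (0 : EuclideanSpace ℝ (Fin N)) R,
          ‖gradient (fun y : EuclideanSpace ℝ (Fin N) =>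
              lam₁ * max (-⟪y, ν₀⟫) 0) x‖ ^ p₀ / p₀
            + (if 0 < lam₁ * max (-⟪x, ν₀⟫) 0 then lam₀ else 0)) ≤
      (∫ x in ball (0 : EuclideanSpace ℝ (Fin N)) R,
          ‖gradient v x‖ ^ p₀ / p₀ + (if 0 < v x then lam₀ else 0))) :
    lam₁ = ((p₀ / (p₀ - 1)) * lam₀) ^ (1 / p₀) := by
  set ρ : ℝ := R / 2 with hρdef
  have hρ : 0 < ρ := by positivity
  have hρR : ρ < R := by rw [hρdef]; linarith
  set M : ℝ := 4 * ρ ^ 3 with hM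
  have hMpos : 0 < M := by positivity
  set c : ℝ := ∫ x in ball (0 : EuclideanSpace ℝ (Fin N)) R,
      (if ⟪x, ν₀⟫ < 0 then ⟪cutoffGrad ρ x, ν₀⟫ else 0) with hc
  have hcpos : 0 < c := integral_pos hν₀ hρ hρR
  set L : ℝ := lam₁ ^ p₀ with hL
  have hLpos : 0 < L := Real.rpow_pos_of_pos hlam₁ _
  set a : ℝ := L * (1 - 1 / p₀) - lam₀ with ha
  set C₁ : ℝ := p₀ / 2 * M ^ 2 + (p₀ / 2 * (2 * M + M ^ 2)) ^ 2 with hC₁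
  have hC₁pos : 0 ≤ C₁ := by positivity
  set C₂ : ℝ := L / p₀ * C₁ + |a| * (4 * ρ ^ 6) with hC₂
  have hcg := continuous_cutoffGrad (N := N) ρ
  -- The threshold makes `shift` bijective and puts `norm_rpow_le` in force.
  set δ : ℝ := min 1 (min (1 / (2 * M)) (1 / (p₀ / 2 * (2 * M + M ^ 2)))) with hδ
  have hδpos : 0 < δ := by positivity
  have key : ∀ ε : ℝ, |ε| ≤ δ →
      0 ≤ ε * (a * c) + (C₂ * (volume (ball (0 : EuclideanSpace ℝ (Fin N)) R)).toReal) * ε ^ 2 := by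
    intro ε hε
    have hε1 : |ε| ≤ 1 := hε.trans (min_le_left _ _)
    have hε2 : |ε| * M < 1 := by
      have : |ε| ≤ 1 / (2 * M) := hε.trans ((min_le_right _ _).trans (min_le_left _ _))
      rw [le_div_iff₀ (by positivity)] at this
      linarith
    have hε3 : p₀ / 2 * (|ε| * (2 * M + M ^ 2)) ≤ 1 := by
      have : |ε| ≤ 1 / (p₀ / 2 * (2 * M + M ^ 2)) :=
        hε.trans ((min_le_right _ _).trans (min_le_right _ _))
      rw [le_div_iff₀ (by positivity)] at this
      linarith
    have h := hmin (fun y => lam₁ * max (-⟪shift ν₀ ρ ε y, ν₀⟫) 0)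
      (locLip_competitor hν₀ hρ ε hlam₁ _)
      ⟨closedBall 0 ρ, isCompact_closedBall 0 ρ, closedBall_subset_ball hρR, fun x hx => by
        rw [mem_closedBall_zero_iff, not_le] at hx
        simp only [shift_eq_self hρ hx.le]⟩
    have hu := fun x => density_eq hν₀ ρ 0 (lam₀ := lam₀) hp₀ hlam₁ x
    simp only [shift_zero, zero_smul, add_zero, hν₀, Real.one_rpow, mul_one] at hu
    simp only [hu, density_eq hν₀ ρ ε hp₀ hlam₁] at h
    rw [volume_halfBall hν₀ hρ hρR hε2] at h
    have hi1 : IntegrableOn (fun x : EuclideanSpace ℝ (Fin N) => if ⟪shift ν₀ ρ ε x, ν₀⟫ < 0 then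
        L * ‖ν₀ + ε • cutoffGrad ρ x‖ ^ p₀ / p₀ + lam₀ else 0) (ball 0 R) := by
      refine integrableOn_ite ρ ε R ?_
      have : Continuous fun x : EuclideanSpace ℝ (Fin N) => ‖ν₀ + ε • cutoffGrad ρ x‖ ^ p₀ :=
        Continuous.rpow_const (by fun_prop) fun x => Or.inr (by linarith)
      fun_prop
    have hi2 : IntegrableOn (fun x : EuclideanSpace ℝ (Fin N) => if ⟪shift ν₀ ρ ε x, ν₀⟫ < 0 then
        (1 + ε * ⟪cutoffGrad ρ x, ν₀⟫) * (L / p₀ + lam₀) else 0) (ball 0 R) :=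
      integrableOn_ite ρ ε R (by fun_prop)
    have hi3 : IntegrableOn (fun x : EuclideanSpace ℝ (Fin N) => if ⟪x, ν₀⟫ < 0 then
        ⟪cutoffGrad ρ x, ν₀⟫ else 0) (ball 0 R) := by
      have := integrableOn_ite (ν := ν₀) ρ 0 R (f := fun x => ⟪cutoffGrad ρ x, ν₀⟫) (by fun_prop)
      simpa only [shift_zero] using this
    have hi4 : IntegrableOn (fun _ : EuclideanSpace ℝ (Fin N) => C₂ * ε ^ 2) (ball 0 R) :=
      integrableOn_const (measure_ball_lt_top.ne)
    have hle : ∫ x in ball (0 : EuclideanSpace ℝ (Fin N)) R,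
        ((if ⟪shift ν₀ ρ ε x, ν₀⟫ < 0 then
          L * ‖ν₀ + ε • cutoffGrad ρ x‖ ^ p₀ / p₀ + lam₀ else 0) -
        (if ⟪shift ν₀ ρ ε x, ν₀⟫ < 0 then
          (1 + ε * ⟪cutoffGrad ρ x, ν₀⟫) * (L / p₀ + lam₀) else 0)) ≤
        ∫ x in ball (0 : EuclideanSpace ℝ (Fin N)) R,
          ((ε * a) * (if ⟪x, ν₀⟫ < 0 then ⟪cutoffGrad ρ x, ν₀⟫ else 0) + C₂ * ε ^ 2) := by
      refine integral_mono (hi1.sub hi2) ((hi3.const_mul _).add hi4) fun x => ?_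
      have h1 := norm_rpow_le hν₀ hp₀ hMpos.le (norm_cutoffGrad_le hρ x) hε1 hε3
      have h2 := shift_indicator_le hν₀ ρ ε (ε * a) x
      have h3 := mul_le_mul_of_nonneg_left h1 (div_nonneg hLpos.le (by linarith : 0 ≤ p₀))
      have h4 : |ε * a| * (4 * ρ ^ 6) * |ε| = |a| * (4 * ρ ^ 6) * ε ^ 2 := by
        rw [abs_mul, ← sq_abs ε]; ring
      rw [h4] at h2
      have h5 : 0 ≤ L / p₀ * C₁ * ε ^ 2 := by positivity
      simp only [mul_ite, mul_zero]
      refine le_trans ?_ (le_of_le_of_eq (add_le_add_left h2 (L / p₀ * C₁ * ε ^ 2)) ?_)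
      · split_ifs
        · have e : L / p₀ * (p₀ * (ε * ⟪cutoffGrad ρ x, ν₀⟫)) = L * (ε * ⟪cutoffGrad ρ x, ν₀⟫) := by
            field_simp
          have e2 : L * ‖ν₀ + ε • cutoffGrad ρ x‖ ^ p₀ / p₀ =
            L / p₀ * ‖ν₀ + ε • cutoffGrad ρ x‖ ^ p₀ := by ring
          have e3 : ε * a * ⟪cutoffGrad ρ x, ν₀⟫ = L * (ε * ⟪cutoffGrad ρ x, ν₀⟫)
            - (L / p₀ + lam₀) * (ε * ⟪cutoffGrad ρ x, ν₀⟫) := by rw [ha]; ring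
          rw [e2, e3]
          rw [← hC₁, mul_add, mul_add, e] at h3
          linarith
        · linarith
      · rw [hC₂]; ring
    rw [integral_sub hi1 hi2, integral_add (hi3.const_mul _) hi4, integral_const_mul, ← hc,
      setIntegral_const, smul_eq_mul, Measure.real] at hle
    linarith
  have hac := eq_zero_of_quadratic hδpos key
  have ha0 : a = 0 := (mul_eq_zero.1 hac).resolve_right hcpos.ne'
  have hp1 : p₀ - 1 ≠ 0 := by linarith
  have hp0 : p₀ ≠ 0 := by linarith
  have hfin : p₀ / (p₀ - 1) * lam₀ = L := by
    have : lam₀ = L * (1 - 1 / p₀) := by linarith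
    rw [this]; field_simp
  rw [hfin, hL, one_div, Real.rpow_rpow_inv hlam₁.le hp0]
end

section
/- Let Ω ⊂ ℝ^N be open, p : Ω → ℝ measurable with 1 < p(x) ≤ p_max < ∞, and let u : Ω → [0, ∞) be Lipschitz with constant C_Lip and p(x)-subharmonic in the weak sense, i.e. −∫_Ω |∇u|^{p(x)−2}∇u · ∇φ dx ≥ 0 for every nonnegative φ ∈ C_c^∞(Ω). Then there exists a constant C, depending only on N, C_Lip and p_max, such that for every ball B_{2r}(x₀) ⊂ Ω and every φ ∈ C_c^∞(B_r(x₀)) with 0 ≤ φ ≤ 1, one has −∫ |∇u|^{p(x)−2}∇u · ∇φ dx ≤ C r^{N−1}. (Equivalently, the nonnegative Radon measure Λ = Δ_{p(x)}u satisfies Λ(B_r(x₀)) ≤ C r^{N−1}.) -/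
/-!
The functional `Λ(φ) = -∫_Ω |∇u|^{p-2} ∇u · ∇φ` is linear on test functions and nonnegative on
nonnegative ones, hence monotone. If `ψ` is a cutoff with `ψ = 1` on `B_r(x₀)`, support in
`closedBall x₀ (2r)` and `|∇ψ| ≤ K / r`, then `φ ≤ ψ`, so `Λ(φ) ≤ Λ(ψ)`. Since `|∇u| ≤ C_Lip` on
`Ω` and `0 < p - 1 ≤ p_max - 1`, the flux is bounded by `M = max(1, C_Lip)^{p_max - 1}`, whence
`Λ(ψ) ≤ M (K / r) |B_{2r}| = M K 2^N |B_1| r^{N-1}`.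

The cutoff is the rescaling of one fixed bump function, so that `K` depends on `N` only
(`exists_cutoff`). Linearity of the Bochner integral needs integrability of the flux against
gradients of test functions (`integrableOn_flux`), which follows from the same pointwise bound
(`abs_flux_le`).
-/

open scoped RealInnerProductSpace
open MeasureTheory Metric

/-- Bound on the `p`-flux paired with a vector. The case `g = 0` is harmless also when `p < 2`,
where `‖g‖ ^ (p - 2)` is a singular (junk) value, because the inner product vanishes. -/
lemma abs_flux_le {E : Type*} [NormedAddCommGroup E] [InnerProductSpace ℝ E]
    {g h : E} {L p pmax : ℝ} (hg : ‖g‖ ≤ L) (hp : 1 < p) (hpm : p ≤ pmax) :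
    |‖g‖ ^ (p - 2) * ⟪g, h⟫| ≤ (max 1 L) ^ (pmax - 1) * ‖h‖ := by
  rcases eq_or_ne g 0 with rfl | hg0
  · simp only [inner_zero_left, mul_zero, abs_zero]
    positivity
  have hpos : 0 < ‖g‖ := norm_pos_iff.2 hg0
  have h1 : ‖g‖ ^ (p - 2) * ‖g‖ = ‖g‖ ^ (p - 1) := by
    rw [← Real.rpow_add_one hpos.ne']
    congr 1
    ring
  calc |‖g‖ ^ (p - 2) * ⟪g, h⟫| = ‖g‖ ^ (p - 2) * |⟪g, h⟫| := by
        rw [abs_mul, abs_of_nonneg (by positivity)]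
    _ ≤ ‖g‖ ^ (p - 2) * (‖g‖ * ‖h‖) := by
        gcongr
        exact abs_real_inner_le_norm g h
    _ = ‖g‖ ^ (p - 1) * ‖h‖ := by rw [← mul_assoc, h1]
    _ ≤ (max 1 L) ^ (p - 1) * ‖h‖ := by
        gcongr
        exact hg.trans (le_max_right _ _)
    _ ≤ (max 1 L) ^ (pmax - 1) * ‖h‖ := by
        gcongr
        exact le_max_left _ _

section

variable {N : ℕ}

lemma measurable_gradient (f : EuclideanSpace ℝ (Fin N) → ℝ) : Measurable (gradient f) :=
  (InnerProductSpace.toDual ℝ (EuclideanSpace ℝ (Fin N))).symm.continuous.measurable.comp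
    (measurable_fderiv ℝ f)

lemma norm_gradient (f : EuclideanSpace ℝ (Fin N) → ℝ) (x : EuclideanSpace ℝ (Fin N)) :
    ‖gradient f x‖ = ‖fderiv ℝ f x‖ :=
  LinearIsometryEquiv.norm_map _ _

lemma gradient_eq_zero_of_notMem_tsupport {f : EuclideanSpace ℝ (Fin N) → ℝ}
    {x : EuclideanSpace ℝ (Fin N)} (hx : x ∉ tsupport f) : gradient f x = 0 := by
  rw [← norm_eq_zero, norm_gradient, fderiv_of_notMem_tsupport ℝ hx, norm_zero]

lemma integrable_norm_gradient {φ : EuclideanSpace ℝ (Fin N) → ℝ}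
    (hφ : ContDiff ℝ (⊤ : ℕ∞) φ) (hc : HasCompactSupport φ) :
    Integrable (fun x => ‖gradient φ x‖) := by
  simp only [norm_gradient]
  exact ((hφ.continuous_fderiv (by simp)).integrable_of_hasCompactSupport (hc.fderiv ℝ)).norm

lemma norm_gradient_le_of_lipschitzOn {Ω : Set (EuclideanSpace ℝ (Fin N))} (hΩ : IsOpen Ω)
    {u : EuclideanSpace ℝ (Fin N) → ℝ} {L : NNReal} (hu : LipschitzOnWith L u Ω)
    {x : EuclideanSpace ℝ (Fin N)} (hx : x ∈ Ω) : ‖gradient u x‖ ≤ L := by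
  rw [norm_gradient]
  exact norm_fderiv_le_of_lipschitzOn ℝ (hΩ.mem_nhds hx) hu

lemma integrableOn_flux {Ω : Set (EuclideanSpace ℝ (Fin N))} (hΩ : IsOpen Ω)
    {p u : EuclideanSpace ℝ (Fin N) → ℝ} {L : NNReal} {pmax : ℝ} (hp : Measurable p)
    (hpb : ∀ x ∈ Ω, 1 < p x ∧ p x ≤ pmax) (hu : LipschitzOnWith L u Ω)
    {φ : EuclideanSpace ℝ (Fin N) → ℝ}
    (hφ : ContDiff ℝ (⊤ : ℕ∞) φ) (hc : HasCompactSupport φ) :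
    IntegrableOn (fun x => ‖gradient u x‖ ^ (p x - 2) * ⟪gradient u x, gradient φ x⟫) Ω := by
  refine Integrable.mono'
    (((integrable_norm_gradient hφ hc).const_mul ((max 1 (L : ℝ)) ^ (pmax - 1))).integrableOn) ?_ ?_
  · refine Measurable.aestronglyMeasurable ?_
    exact ((measurable_gradient u).norm.pow (hp.sub_const 2)).mul
      ((measurable_gradient u).inner (measurable_gradient φ))
  · refine (ae_restrict_iff' hΩ.measurableSet).2 (Filter.Eventually.of_forall fun x hx => ?_)
    exact abs_flux_le (norm_gradient_le_of_lipschitzOn hΩ hu hx) (hpb x hx).1 (hpb x hx).2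

/-- Cutoffs between `closedBall x₀ r` and `closedBall x₀ (2r)` with gradient at most `K / r`, where
`K` depends on the dimension only. -/
lemma exists_cutoff_s16 (N : ℕ) : ∃ K : ℝ, 0 ≤ K ∧ ∀ (x₀ : EuclideanSpace ℝ (Fin N)) (r : ℝ), 0 < r →
    ∃ ψ : EuclideanSpace ℝ (Fin N) → ℝ, ContDiff ℝ (⊤ : ℕ∞) ψ ∧ HasCompactSupport ψ ∧
      tsupport ψ ⊆ closedBall x₀ (2 * r) ∧ (∀ x, 0 ≤ ψ x) ∧ (∀ x ∈ closedBall x₀ r, ψ x = 1) ∧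
      ∀ x, ‖gradient ψ x‖ ≤ K * r⁻¹ := by
  let η : ContDiffBump (0 : EuclideanSpace ℝ (Fin N)) := ⟨1, 2, one_pos, one_lt_two⟩
  have hη : ContDiff ℝ (⊤ : ℕ∞) η := η.contDiff
  obtain ⟨K, hK⟩ : ∃ K, LipschitzWith K η :=
    ContDiff.lipschitzWith_of_hasCompactSupport η.hasCompactSupport hη (by simp)
  refine ⟨K, K.2, fun x₀ r hr => ?_⟩
  have hdist : ∀ x, ‖r⁻¹ • (x - x₀)‖ = r⁻¹ * dist x x₀ := fun x => by
    rw [norm_smul, Real.norm_of_nonneg (by positivity), dist_eq_norm]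
  have hts : tsupport (fun x => η (r⁻¹ • (x - x₀))) ⊆ closedBall x₀ (2 * r) := by
    refine closure_minimal (fun x hx => ?_) isClosed_closedBall
    have h1 : r⁻¹ • (x - x₀) ∈ Function.support η := hx
    rw [η.support_eq, mem_ball_zero_iff, hdist, inv_mul_lt_iff₀ hr] at h1
    rw [mem_closedBall, mul_comm]
    exact h1.le
  refine ⟨fun x => η (r⁻¹ • (x - x₀)), hη.comp (by fun_prop), ?_, hts, fun x => η.nonneg, ?_, ?_⟩
  · exact (isCompact_closedBall x₀ (2 * r)).of_isClosed_subset (isClosed_tsupport _) hts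
  · intro x hx
    refine η.one_of_mem_closedBall ?_
    rw [mem_closedBall_zero_iff, hdist, inv_mul_le_iff₀ hr]
    simpa [η] using hx
  · intro x
    have hr' : 0 ≤ r⁻¹ := by positivity
    have hL : LipschitzWith (K * ⟨r⁻¹, hr'⟩) (fun x => η (r⁻¹ • (x - x₀))) := by
      refine hK.comp (LipschitzWith.of_dist_le_mul fun x y => ?_)
      rw [dist_eq_norm, ← smul_sub, sub_sub_sub_cancel_right, norm_smul,
        Real.norm_of_nonneg hr', dist_eq_norm]
      rfl
    rw [norm_gradient]
    exact norm_fderiv_le_of_lipschitz ℝ hL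

end

/-- Let `Ω ⊂ ℝ^N` be open, `p` measurable with `1 < p(x) ≤ p_max < ∞`,
and `u : Ω → [0,∞)` Lipschitz with constant `C_Lip` and `p(x)`-subharmonic in the weak
sense. Then there is `C > 0`, depending only on `N`, `C_Lip` and `p_max`, such that for
every ball `B_{2r}(x₀) ⊂ Ω` and every `φ ∈ C_c^∞(B_r(x₀))` with `0 ≤ φ ≤ 1`,
`−∫ |∇u|^{p(x)−2}∇u·∇φ ≤ C r^{N−1}`. -/
theorem stmt_16 (N : ℕ) (CLip : NNReal) (pmax : ℝ) (hpmax : 1 < pmax) :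
    ∃ C > (0 : ℝ), ∀ (Ω : Set (EuclideanSpace ℝ (Fin N))), IsOpen Ω →
      ∀ p u : EuclideanSpace ℝ (Fin N) → ℝ, Measurable p →
      (∀ x ∈ Ω, 1 < p x ∧ p x ≤ pmax) →
      (∀ x ∈ Ω, 0 ≤ u x) → LipschitzOnWith CLip u Ω →
      (∀ φ : EuclideanSpace ℝ (Fin N) → ℝ, ContDiff ℝ (⊤ : ℕ∞) φ →
        HasCompactSupport φ → tsupport φ ⊆ Ω → (∀ x, 0 ≤ φ x) →
        0 ≤ -∫ x in Ω, ‖gradient u x‖ ^ (p x - 2) * ⟪gradient u x, gradient φ x⟫) →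
      ∀ (x₀ : EuclideanSpace ℝ (Fin N)) (r : ℝ), 0 < r → closedBall x₀ (2 * r) ⊆ Ω →
      ∀ φ : EuclideanSpace ℝ (Fin N) → ℝ, ContDiff ℝ (⊤ : ℕ∞) φ →
        HasCompactSupport φ → tsupport φ ⊆ ball x₀ r → (∀ x, 0 ≤ φ x ∧ φ x ≤ 1) →
        -∫ x in Ω, ‖gradient u x‖ ^ (p x - 2) * ⟪gradient u x, gradient φ x⟫ ≤
          C * r ^ ((N : ℝ) - 1) := by
  obtain ⟨K, hK0, hK⟩ := exists_cutoff_s16 N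
  let M : ℝ := (max 1 (CLip : ℝ)) ^ (pmax - 1)
  have hM : 0 ≤ M := by positivity
  let ω : ℝ := volume.real (ball (0 : EuclideanSpace ℝ (Fin N)) 1)
  have hω : 0 ≤ ω := measureReal_nonneg
  -- The summand `1` only serves to make the constant strictly positive.
  refine ⟨M * K * 2 ^ N * ω + 1, by positivity, ?_⟩
  intro Ω hΩ p u hp hpb _ hu hsub x₀ r hr hball φ hφ hφc hφs hφb
  obtain ⟨ψ, hψ, hψc, hψs, hψ0, hψ1, hψg⟩ := hK x₀ r hr
  have hφI := integrableOn_flux hΩ hp hpb hu hφ hφc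
  have hψI := integrableOn_flux hΩ hp hpb hu hψ hψc
  have hφΩ : tsupport φ ⊆ Ω :=
    hφs.trans (ball_subset_closedBall.trans
      ((closedBall_subset_closedBall (by linarith)).trans hball))
  have hle : ∀ x, φ x ≤ ψ x := fun x => by
    by_cases hx : x ∈ ball x₀ r
    · rw [hψ1 x (ball_subset_closedBall hx)]
      exact (hφb x).2
    · rw [image_eq_zero_of_notMem_tsupport fun h => hx (hφs h)]
      exact hψ0 x
  have hgrad : ∀ x, gradient (ψ - φ) x = gradient ψ x - gradient φ x := fun x => by
    simp only [gradient]
    rw [fderiv_sub (hψ.differentiable (by simp) x) (hφ.differentiable (by simp) x), map_sub]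
  have hmono : -∫ x in Ω, ‖gradient u x‖ ^ (p x - 2) * ⟪gradient u x, gradient φ x⟫ ≤
      -∫ x in Ω, ‖gradient u x‖ ^ (p x - 2) * ⟪gradient u x, gradient ψ x⟫ := by
    have h := hsub (ψ - φ) (hψ.sub hφ) (hψc.sub hφc)
      ((tsupport_sub ψ φ).trans (Set.union_subset (hψs.trans hball) hφΩ))
      (fun x => sub_nonneg.2 (hle x))
    simp only [hgrad, inner_sub_right, mul_sub] at h
    rw [integral_sub hψI hφI] at h
    linarith
  have hvol : volume.real (closedBall x₀ (2 * r)) = (2 * r) ^ N * ω := by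
    rw [measureReal_def, Measure.addHaar_closedBall _ _ (by positivity), ENNReal.toReal_mul,
      ENNReal.toReal_ofReal (by positivity), finrank_euclideanSpace_fin]
    rfl
  have hbound : |∫ x in Ω, ‖gradient u x‖ ^ (p x - 2) * ⟪gradient u x, gradient ψ x⟫| ≤
      M * (K * r⁻¹) * ((2 * r) ^ N * ω) := by
    have hset := setIntegral_eq_of_subset_of_forall_sdiff_eq_zero (μ := volume)
      (f := fun x => ‖gradient u x‖ ^ (p x - 2) * ⟪gradient u x, gradient ψ x⟫)
      hΩ.measurableSet hball (fun x hx => by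
        rw [gradient_eq_zero_of_notMem_tsupport fun h => hx.2 (hψs h), inner_zero_right, mul_zero])
    rw [← hvol, hset, ← Real.norm_eq_abs]
    refine norm_setIntegral_le_of_norm_le_const
      measure_closedBall_lt_top fun x hx => ?_
    have hx' := hball hx
    refine (abs_flux_le (norm_gradient_le_of_lipschitzOn hΩ hu hx')
      (hpb x hx').1 (hpb x hx').2).trans ?_
    exact mul_le_mul_of_nonneg_left (hψg x) hM
  have hpow : r ^ ((N : ℝ) - 1) = r ^ N * r⁻¹ := by
    rw [Real.rpow_sub hr, Real.rpow_natCast, Real.rpow_one, div_eq_mul_inv]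
  calc _ ≤ _ := hmono
    _ ≤ _ := neg_le_abs _
    _ ≤ _ := hbound
    _ = M * K * 2 ^ N * ω * r ^ ((N : ℝ) - 1) := by
        rw [hpow, mul_pow]
        ring
    _ ≤ (M * K * 2 ^ N * ω + 1) * r ^ ((N : ℝ) - 1) := by
        gcongr
        linarith
end
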